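/- For fixed θ ∈ (0, π) and a, b > −1, the Jacobi polynomial satisfies the asymptotic formula P_n^{(a,b)}(cos θ) = (πn)^{−1/2} (sin(θ/2))^{−a−1/2} (cos(θ/2))^{−b−1/2} cos[(n + (a+b+1)/2)θ − (π/2)(a + 1/2)] + O(n^{−3/2}) as n → ∞, uniformly for θ in compact subsets of (0,π). -/

import Mathlib

open MeasureTheory Real Filter Finset intervalIntegral

/-- Jacobi polynomial `P_n^{(a,b)}` via the explicit hypergeometric-type sum,
normalized so that `P_n^{(a,b)}(1) = Γ(n+a+1)/(n! Γ(a+1))`. -/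
noncomputable def jacobiP (a b : ℝ) (n : ℕ) (x : ℝ) : ℝ :=
  (Real.Gamma (a + n + 1) / (n.factorial * Real.Gamma (a + b + (n : ℝ) + 1))) *
    ∑ m ∈ Finset.range (n + 1),
      (n.choose m : ℝ) * Real.Gamma (a + b + (n : ℝ) + m + 1) / Real.Gamma (a + (m : ℝ) + 1) *
        ((x - 1) / 2) ^ m

/-- Squared norm `h_j^{(a,b)}` of the Jacobi polynomials. -/
noncomputable def jacobiH (a b : ℝ) (j : ℕ) : ℝ :=
  2 ^ (a + b + 1) * Real.Gamma ((j : ℝ) + a + 1) * Real.Gamma ((j : ℝ) + b + 1) /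
    (j.factorial * (2 * (j : ℝ) + a + b + 1) * Real.Gamma ((j : ℝ) + a + b + 1))

/-- Orthonormalized Jacobi functions `φ_j`. -/
noncomputable def jacobiPhi (a b : ℝ) (j : ℕ) (x : ℝ) : ℝ :=
  jacobiP a b j x * (1 - x) ^ (a / 2) * (1 + x) ^ (b / 2) / Real.sqrt (jacobiH a b j)

/-- Bessel function of the first kind of order `ν` (series definition). -/
noncomputable def besselJ (ν : ℝ) (t : ℝ) : ℝ :=
  ∑' m : ℕ, (-1 : ℝ) ^ m / (m.factorial * Real.Gamma ((m : ℝ) + ν + 1)) *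
    (t / 2) ^ (2 * (m : ℝ) + ν)

/-- Christoffel–Darboux kernel of the Jacobi unitary ensemble. -/
noncomputable def K2 (a b : ℝ) (N : ℕ) (x y : ℝ) : ℝ :=
  ∑ j ∈ Finset.range N, jacobiPhi a b j x * jacobiPhi a b j y

/-- The operator `ε`: `(εg)(x) = (1/2)(∫_{-1}^x g - ∫_x^1 g)`. -/
noncomputable def epsOp (g : ℝ → ℝ) (x : ℝ) : ℝ :=
  (1 / 2) * ((∫ y in (-1 : ℝ)..x, g y) - ∫ y in x..(1 : ℝ), g y)


section Cauchy
open Metric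

lemma jac_dslope_diffCont {f : ℂ → ℂ} {w : ℂ} (hf : DiffContOnCl ℂ f (ball 0 1))
    (hw : w ∈ ball (0:ℂ) 1) : DiffContOnCl ℂ (dslope f w) (ball 0 1) := by
  refine ⟨(Complex.differentiableOn_dslope (isOpen_ball.mem_nhds hw)).2 hf.differentiableOn, ?_⟩
  refine (continuousOn_dslope ?_).2 ⟨hf.continuousOn, hf.differentiableAt isOpen_ball hw⟩
  exact Filter.mem_of_superset (isOpen_ball.mem_nhds hw) subset_closure

lemma jac_circle_ne {w z : ℂ} (hw : w ∈ ball (0:ℂ) 1) (hz : z ∈ sphere (0:ℂ) 1) : z - w ≠ 0 := by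
  intro h
  rw [sub_eq_zero] at h
  subst h
  simp at hw hz
  linarith

lemma jac_cauchy_dslope (n : ℕ) {f : ℂ → ℂ} {w : ℂ} (hf : DiffContOnCl ℂ f (ball 0 1))
    (hw : w ∈ ball (0:ℂ) 1) :
    (∮ z in C(0, 1), f z * (z - w) ^ (-(n:ℤ) - 1)) =
      2 * π * Complex.I * ((Function.swap dslope w)^[n] f) w := by
  induction n generalizing f with
  | zero =>
    have := hf.circleIntegral_sub_inv_smul hw
    simp only [smul_eq_mul] at this
    simp only [Function.iterate_zero, id]
    rw [← this]
    congr 1; ext z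
    simp [mul_comm]
  | succ n ih =>
    have h := ih (jac_dslope_diffCont hf hw)
    rw [Function.iterate_succ_apply]
    change _ = 2 * π * Complex.I * ((Function.swap dslope w)^[n] (dslope f w)) w
    rw [← h]
    have hc : ContinuousOn (dslope f w) (sphere 0 1) :=
      ((jac_dslope_diffCont hf hw).continuousOn).mono (by
        rw [closure_ball _ one_ne_zero]; exact sphere_subset_closedBall)
    have hz0 : (∮ z in C(0, 1), f w * (z - w) ^ (-((n+1:ℕ):ℤ) - 1)) = 0 := by
      have := circleIntegral.integral_const_mul (f w) (fun z => (z - w) ^ (-((n+1:ℕ):ℤ) - 1)) 0 1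
      rw [this, circleIntegral.integral_sub_zpow_of_ne (by push_cast; omega), mul_zero]
    have e : (∮ z in C(0, 1), f z * (z - w) ^ (-((n+1:ℕ):ℤ) - 1)) =
        ∮ z in C(0, 1), (f w * (z - w) ^ (-((n+1:ℕ):ℤ) - 1)
          + dslope f w z * (z - w) ^ (-(n:ℤ) - 1)) := by
      refine circleIntegral.integral_congr zero_le_one fun z hz => ?_
      have hne := jac_circle_ne hw hz
      have h1 := sub_smul_dslope f w z
      simp only [smul_eq_mul] at h1
      have h2 : f z = f w + (z - w) * dslope f w z := by rw [h1]; ring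
      have h3 : (z - w) ^ (-(n:ℤ) - 1) = (z - w) * (z - w) ^ (-((n+1:ℕ):ℤ) - 1) := by
        rw [← zpow_one_add₀ hne]; congr 1; push_cast; ring
      simp only [h3]
      rw [h2]; ring
    have hcz : ∀ k : ℤ, ContinuousOn (fun z : ℂ => (z - w) ^ k) (sphere 0 1) := fun k =>
      ContinuousOn.zpow₀ (by fun_prop) k (fun z hz => Or.inl (jac_circle_ne hw hz))
    rw [e, circleIntegral.integral_add, hz0, zero_add]
    · exact (continuousOn_const.mul (hcz _)).circleIntegrable zero_le_one
    · exact (hc.mul (hcz _)).circleIntegrable zero_le_one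

lemma jac_cauchy (n : ℕ) {f : ℂ → ℂ} {w : ℂ} (hf : DiffContOnCl ℂ f (ball 0 1))
    (hw : w ∈ ball (0:ℂ) 1) :
    (∮ z in C(0, 1), f z * (z - w) ^ (-(n:ℤ) - 1)) =
      2 * π * Complex.I * (iteratedDeriv n f w / n.factorial) := by
  rw [jac_cauchy_dslope n hf hw]
  have ha : AnalyticAt ℂ f w := hf.differentiableOn.analyticAt (isOpen_ball.mem_nhds hw)
  have h1 := ha.hasFPowerSeriesAt.has_fpower_series_iterate_dslope_fslope n
  have h2 := h1.coeff_zero (fun _ => 0)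
  rw [← h2]
  have h3 := FormalMultilinearSeries.coeff_iterate_fslope (p := FormalMultilinearSeries.ofScalars ℂ
    (fun n ↦ iteratedDeriv n f w / n.factorial)) n 0
  rw [zero_add, FormalMultilinearSeries.coeff_ofScalars] at h3
  rw [← h3]
  congr 1
  rw [FormalMultilinearSeries.coeff]
  congr 1
  ext i; exact i.elim0

end Cauchy

section Rodrigues

/-- Falling factorial. -/
noncomputable def jacD (k : ℕ) (r : ℝ) : ℝ := ∏ i ∈ Finset.range k, (r - i)

lemma jacD_smeval (k : ℕ) (r : ℝ) : (descPochhammer ℤ k).smeval r = jacD k r := by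
  induction k with
  | zero => simp [jacD]
  | succ k ih =>
    rw [descPochhammer_succ_right, Polynomial.smeval_mul, ih, jacD, jacD, Finset.prod_range_succ]
    simp [Polynomial.smeval_sub, Polynomial.smeval_natCast]

lemma jacD_vandermonde (m : ℕ) (r s : ℝ) :
    ∑ j ∈ Finset.range (m + 1), (m.choose j : ℝ) * (jacD (m - j) r * jacD j s) = jacD m (s + r) := by
  have h := Ring.descPochhammer_smeval_add (R := ℝ) (r := s) (s := r) m (Commute.all _ _)
  rw [Finset.Nat.sum_antidiagonal_eq_sum_range_succ_mk] at h
  simp only [jacD_smeval] at h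
  rw [h]
  refine Finset.sum_congr rfl fun j _ => ?_
  ring

lemma jacD_gamma (k : ℕ) (r : ℝ) (h : (k:ℝ) < r + 1) :
    Real.Gamma (r + 1) = jacD k r * Real.Gamma (r - k + 1) := by
  induction k with
  | zero => simp [jacD]
  | succ k ih =>
    push_cast at h ⊢
    rw [ih (by linarith), jacD, jacD, Finset.prod_range_succ, Real.Gamma_add_one (s := r - k) (by linarith)]
    rw [show r - (k + 1 : ℝ) + 1 = r - k by ring]
    ring

lemma jacD_split (n m j : ℕ) (hj : j ≤ m) (hm : m ≤ n) (a : ℝ) :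
    jacD (n - j) (n + a) = jacD (n - m) (n + a) * jacD (m - j) (a + m) := by
  obtain ⟨p, rfl⟩ := Nat.exists_eq_add_of_le hj
  obtain ⟨q, rfl⟩ := Nat.exists_eq_add_of_le hm
  have e1 : j + p + q - j = q + p := by omega
  have e2 : j + p + q - (j + p) = q := by omega
  have e3 : j + p - j = p := by omega
  rw [e1, e2, e3, jacD, Finset.prod_range_add]
  rw [jacD, jacD]
  congr 1
  refine Finset.prod_congr rfl fun i _ => ?_
  push_cast; ring

lemma jacobiP_eq_sum (a b : ℝ) (ha : -1 < a) (hb : -1 < b) (n : ℕ) (hn : 1 ≤ n) (x : ℝ) :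
    jacobiP a b n x = (1 / n.factorial : ℝ) * ∑ j ∈ Finset.range (n + 1),
      (n.choose j : ℝ) * jacD (n - j) (n + a) * jacD j (n + b) *
        (((x - 1) / 2) ^ j * ((1 + x) / 2) ^ (n - j)) := by
  have hn' : (1:ℝ) ≤ n := by exact_mod_cast hn
  set y := (x - 1) / 2 with hy
  have hy1 : (1 + x) / 2 = y + 1 := by rw [hy]; ring
  have exp : ∀ j ∈ Finset.range (n + 1),
      (n.choose j : ℝ) * jacD (n - j) (n + a) * jacD j (n + b) * (y ^ j * ((1 + x) / 2) ^ (n - j)) =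
      ∑ m ∈ Finset.Ico j (n + 1), (n.choose m : ℝ) * jacD (n - m) (n + a) * y ^ m *
        ((m.choose j : ℝ) * (jacD (m - j) (a + m) * jacD j (n + b))) := by
    intro j hj
    have hj' : j ≤ n := by simp at hj; omega
    rw [hy1, add_pow, Finset.sum_Ico_eq_sum_range, Finset.mul_sum, Finset.mul_sum]
    have : n + 1 - j = n - j + 1 := by omega
    rw [this]
    refine Finset.sum_congr rfl fun i hi => ?_
    have hi' : j + i ≤ n := by simp at hi; omega
    have h1 := jacD_split n (j + i) j (by omega) hi' a
    have h2 : (n.choose (j+i) : ℝ) * ((j + i).choose j : ℝ) = n.choose j * ((n - j).choose i : ℝ) := by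
      have := Nat.choose_mul (n := n) (k := j + i) (s := j) (by omega)
      rw [Nat.add_sub_cancel_left] at this
      exact_mod_cast this
    rw [h1, one_pow, pow_add]
    linear_combination (-(jacD (n - (j + i)) (n + a)) * y ^ j * y ^ i * jacD (j + i - j) (a + (j + i : ℕ)) * jacD j (n + b)) * h2
  rw [Finset.sum_congr rfl exp]
  rw [Finset.sum_comm' (t' := Finset.range (n + 1)) (s' := fun m => Finset.range (m + 1))
    (by intro j m; simp; omega)]
  simp_rw [← Finset.mul_sum, jacD_vandermonde]
  rw [jacobiP, Finset.mul_sum, Finset.mul_sum]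
  refine Finset.sum_congr rfl fun m hm => ?_
  have hm' : m ≤ n := by simp at hm; omega
  have hmr : (m:ℝ) ≤ n := by exact_mod_cast hm'
  have hm0 : (0:ℝ) ≤ m := by positivity
  have g1 := jacD_gamma (n - m) (n + a) (by push_cast [hm']; linarith)
  have g2 := jacD_gamma m (n + b + (a + m)) (by linarith)
  push_cast [hm'] at g1
  rw [show (n:ℝ) + a - (n - m) + 1 = a + m + 1 by ring] at g1
  rw [show (n:ℝ) + b + (a + m) - m + 1 = a + b + n + 1 by ring] at g2
  rw [show a + n + 1 = (n:ℝ) + a + 1 by ring, show a + b + n + m + 1 = (n:ℝ) + b + (a + m) + 1 by ring, g1, g2]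
  have p1 : Real.Gamma (a + m + 1) ≠ 0 := (Real.Gamma_pos_of_pos (by linarith)).ne'
  have p2 : Real.Gamma (a + b + n + 1) ≠ 0 := (Real.Gamma_pos_of_pos (by linarith)).ne'
  field_simp
  rw [hy]

lemma jac_iteratedDeriv (ε : ℂ) (α : ℝ) (k : ℕ) (z : ℂ) (hz : 1 + ε * z ∈ Complex.slitPlane) :
    iteratedDeriv k (fun z : ℂ => (1 + ε * z) ^ (α : ℂ)) z =
      ε ^ k * (jacD k α : ℝ) * (1 + ε * z) ^ ((α : ℂ) - k) := by
  induction k generalizing z with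
  | zero => simp [jacD]
  | succ k ih =>
    rw [iteratedDeriv_succ]
    have hop : IsOpen {z : ℂ | 1 + ε * z ∈ Complex.slitPlane} :=
      Complex.isOpen_slitPlane.preimage (by fun_prop)
    have hev : iteratedDeriv k (fun z : ℂ => (1 + ε * z) ^ (α : ℂ)) =ᶠ[nhds z]
        fun z => ε ^ k * (jacD k α : ℝ) * (1 + ε * z) ^ ((α : ℂ) - k) := by
      filter_upwards [hop.mem_nhds hz] with u hu using ih u hu
    rw [hev.deriv_eq]
    have h1 : HasDerivAt (fun z : ℂ => 1 + ε * z) ε z := by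
      simpa using ((hasDerivAt_id z).const_mul ε).const_add 1
    have h2 := (h1.cpow_const (c := (α:ℂ) - k) hz).const_mul (ε ^ k * (jacD k α : ℝ) : ℂ)
    rw [h2.deriv, jacD, jacD, Finset.prod_range_succ]
    push_cast
    rw [show (α:ℂ) - (k + 1) = α - k - 1 by ring]
    ring

end Rodrigues

section Repr
open Metric

/-- The integrand in the Cauchy formula. -/
noncomputable def jacF (a b : ℝ) (n : ℕ) (x : ℝ) (z : ℂ) : ℂ :=
  (1 + (-1) * z) ^ ((n + a : ℝ) : ℂ) * (1 + 1 * z) ^ ((n + b : ℝ) : ℂ)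

lemma jac_diffCont_factor (ε : ℂ) (hε : ‖ε‖ ≤ 1) (α : ℝ) (hα : 0 < α) :
    DiffContOnCl ℂ (fun z : ℂ => (1 + ε * z) ^ (α : ℂ)) (ball 0 1) := by
  have hre : ∀ z : ℂ, -(‖z‖) ≤ (ε * z).re := fun z => by
    have h1 := Complex.abs_re_le_norm (ε * z)
    have h2 : ‖ε * z‖ ≤ ‖z‖ := by
      rw [norm_mul]; exact mul_le_of_le_one_left (norm_nonneg _) hε
    have := (abs_le.1 h1).1
    linarith
  constructor
  · intro z hz
    have hz' : ‖z‖ < 1 := by simpa using hz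
    have hs : 1 + ε * z ∈ Complex.slitPlane := by
      left
      have := hre z
      simp only [Complex.add_re, Complex.one_re]; linarith
    have h1 : HasDerivAt (fun z : ℂ => 1 + ε * z) ε z := by
      simpa using ((hasDerivAt_id z).const_mul ε).const_add 1
    exact (h1.cpow_const (c := (α:ℂ)) hs).differentiableAt.differentiableWithinAt
  · rw [closure_ball _ one_ne_zero]
    intro z hz
    have hz' : ‖z‖ ≤ 1 := by simpa using hz
    have h0 : 0 ≤ (1 + ε * z).re := by
      have := hre z
      simp only [Complex.add_re, Complex.one_re]; linarith
    have h1 := Complex.continuousAt_cpow_const_of_re_pos (z := 1 + ε * z) (w := (α:ℂ)) (Or.inl h0) (by simpa using hα)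
    exact (ContinuousAt.comp (f := fun z : ℂ => 1 + ε * z) h1 (by fun_prop)).continuousWithinAt

lemma jacF_diffCont (a b : ℝ) (ha : -1 < a) (hb : -1 < b) (n : ℕ) (hn : 1 ≤ n) (x : ℝ) :
    DiffContOnCl ℂ (jacF a b n x) (ball 0 1) := by
  have hn' : (1:ℝ) ≤ n := by exact_mod_cast hn
  have h1 := jac_diffCont_factor (-1) (by simp) (n + a) (by linarith)
  have h2 := jac_diffCont_factor 1 (by simp) (n + b) (by linarith)
  exact h1.smul h2

lemma jacF_iteratedDeriv (a b : ℝ) (ha : -1 < a) (hb : -1 < b) (n : ℕ) (hn : 1 ≤ n) (x : ℝ)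
    (hx : x ∈ Set.Ioo (-1 : ℝ) 1) :
    iteratedDeriv n (jacF a b n x) x / n.factorial =
      (((-2) ^ n * ((1 - x) ^ a * (1 + x) ^ b) * jacobiP a b n x : ℝ) : ℂ) := by
  obtain ⟨hx1, hx2⟩ := hx
  have p1 : 0 < 1 - x := by linarith
  have p2 : 0 < 1 + x := by linarith
  have c1 : (1 + (-1) * (x:ℂ)) = ((1 - x : ℝ) : ℂ) := by push_cast; ring
  have c2 : (1 + 1 * (x:ℂ)) = ((1 + x : ℝ) : ℂ) := by push_cast; ring
  have s1 : 1 + (-1) * (x:ℂ) ∈ Complex.slitPlane := by rw [c1]; exact Or.inl (by simpa using p1)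
  have s2 : 1 + 1 * (x:ℂ) ∈ Complex.slitPlane := by rw [c2]; exact Or.inl (by simpa using p2)
  have hcd : ∀ (ε : ℂ) (α : ℝ), 1 + ε * (x:ℂ) ∈ Complex.slitPlane →
      ContDiffAt ℂ n (fun z : ℂ => (1 + ε * z) ^ (α : ℂ)) (x:ℂ) := by
    intro ε α h
    have : AnalyticAt ℂ (fun z : ℂ => (1 + ε * z) ^ (α : ℂ)) (x:ℂ) := by
      refine AnalyticAt.cpow ?_ analyticAt_const h
      fun_prop
    exact this.contDiffAt
  have h := iteratedDeriv_fun_mul (hcd (-1) (n + a) s1) (hcd 1 (n + b) s2)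
  unfold jacF
  rw [h, jacobiP_eq_sum a b ha hb n hn x, Finset.mul_sum, Finset.mul_sum, Complex.ofReal_sum,
    Finset.sum_div, ← Finset.sum_range_reflect]
  refine Finset.sum_congr rfl fun j hj => ?_
  have hj' : j ≤ n := by simp at hj; omega
  have e1 : n + 1 - 1 - j = n - j := by omega
  have e2 : n - (n - j) = j := by omega
  rw [e1, e2, jac_iteratedDeriv _ _ _ _ s1, jac_iteratedDeriv _ _ _ _ s2, c1, c2, Nat.choose_symm hj']
  have r1 : ((1 - x : ℝ) : ℂ) ^ (((n + a : ℝ) : ℂ) - (n - j : ℕ)) = (((1 - x) ^ a * (1 - x) ^ j : ℝ) : ℂ) := by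
    rw [← Real.rpow_natCast, ← Real.rpow_add p1, Complex.ofReal_cpow p1.le]
    congr 1; push_cast [hj']; ring
  have r2 : ((1 + x : ℝ) : ℂ) ^ (((n + b : ℝ) : ℂ) - (j : ℕ)) = (((1 + x) ^ b * (1 + x) ^ (n - j) : ℝ) : ℂ) := by
    rw [← Real.rpow_natCast, ← Real.rpow_add p2, Complex.ofReal_cpow p2.le]
    congr 1; push_cast [hj']; ring
  rw [r1, r2]
  obtain ⟨m, rfl⟩ := Nat.exists_eq_add_of_le hj'
  have e3 : j + m - j = m := by omega
  rw [e3]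
  have hfac : ((j+m).factorial : ℂ) ≠ 0 := by exact_mod_cast (Nat.factorial_pos _).ne'
  have key : (-2 : ℝ) ^ (j + m) * (((x - 1) / 2) ^ j * ((1 + x) / 2) ^ m) = (-1) ^ m * ((1 - x) ^ j * (1 + x) ^ m) := by
    rw [pow_add, div_pow, div_pow, show x - 1 = (-1) * (1 - x) by ring, mul_pow, show (-2:ℝ) = (-1) * 2 by ring, mul_pow, mul_pow]
    field_simp
    rw [← pow_mul, mul_comm j 2, pow_mul]; norm_num
  have key2 : (-2 : ℝ) ^ (j + m) * ((1 - x) ^ a * (1 + x) ^ b) *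
      (1 / ((j + m).factorial : ℝ) * (((j+m).choose j : ℝ) * jacD m ((j + m : ℕ) + a) * jacD j ((j + m : ℕ) + b) *
        (((x - 1) / 2) ^ j * ((1 + x) / 2) ^ m))) =
      ((j+m).choose j : ℝ) * ((-1) ^ m * jacD m ((j + m : ℕ) + a) * ((1 - x) ^ a * (1 - x) ^ j)) *
        (1 ^ j * jacD j ((j + m : ℕ) + b) * ((1 + x) ^ b * (1 + x) ^ m)) / ((j + m).factorial : ℝ) := by
    rw [one_pow]
    linear_combination (((1 - x) ^ a * (1 + x) ^ b) *
      (1 / ((j + m).factorial : ℝ) * (((j+m).choose j : ℝ) * jacD m ((j + m : ℕ) + a) * jacD j ((j + m : ℕ) + b)))) * key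
  have := congrArg (fun r : ℝ => (r : ℂ)) key2
  rw [mul_assoc ((-2 : ℝ) ^ (j + m))] at this
  simp only [mul_assoc] at this ⊢
  rw [this]
  push_cast
  ring

/-- integrand on the unit circle -/
noncomputable def jacG (a b : ℝ) (n : ℕ) (x : ℝ) (z : ℂ) : ℂ :=
  jacF a b n x z * (z - x) ^ (-(n:ℤ) - 1) * z

lemma jacG_continuous (a b : ℝ) (ha : -1 < a) (hb : -1 < b) (n : ℕ) (hn : 1 ≤ n) (x : ℝ)
    (hx : x ∈ Set.Ioo (-1 : ℝ) 1) :
    Continuous fun φ : ℝ => jacG a b n x (Complex.exp (φ * Complex.I)) := by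
  have hw : (x:ℂ) ∈ ball (0:ℂ) 1 := by
    simp [Complex.norm_real, abs_lt]; exact hx
  have hF := (jacF_diffCont a b ha hb n hn x).continuousOn
  rw [closure_ball _ one_ne_zero] at hF
  have hs : ∀ φ : ℝ, Complex.exp (φ * Complex.I) ∈ sphere (0:ℂ) 1 := fun φ => by
    simp [Complex.norm_exp_ofReal_mul_I]
  have : ContinuousOn (jacG a b n x) (sphere 0 1) := by
    unfold jacG
    refine ((hF.mono sphere_subset_closedBall).mul ?_).mul continuousOn_id
    exact ContinuousOn.zpow₀ (by fun_prop) _ (fun z hz => Or.inl (jac_circle_ne hw hz))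
  exact this.comp_continuous (by fun_prop) hs

lemma jacG_conj (a b : ℝ) (n : ℕ) (x : ℝ) (φ : ℝ) (hφ : φ ∈ Set.Ioo 0 π) :
    jacG a b n x (Complex.exp ((-φ : ℝ) * Complex.I)) =
      (starRingEnd ℂ) (jacG a b n x (Complex.exp (φ * Complex.I))) := by
  have hc : Complex.exp ((-φ : ℝ) * Complex.I) = (starRingEnd ℂ) (Complex.exp (φ * Complex.I)) := by
    rw [← Complex.exp_conj]; simp
  have hcos : -1 < Real.cos φ ∧ Real.cos φ < 1 := by
    constructor
    · rw [← Real.cos_pi]; exact Real.cos_lt_cos_of_nonneg_of_le_pi hφ.1.le le_rfl hφ.2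
    · rw [← Real.cos_zero]; exact Real.cos_lt_cos_of_nonneg_of_le_pi le_rfl hφ.2.le hφ.1
  have hre : (Complex.exp (φ * Complex.I)).re = Real.cos φ := Complex.exp_ofReal_mul_I_re φ
  rw [hc]
  set t := Complex.exp (φ * Complex.I)
  unfold jacG jacF
  have a1 : (1 + (-1) * t).arg ≠ π := by
    apply Complex.slitPlane_arg_ne_pi
    left; simp [hre]; linarith
  have a2 : (1 + 1 * t).arg ≠ π := by
    apply Complex.slitPlane_arg_ne_pi
    left; simp [hre]; linarith
  simp only [map_mul, map_zpow₀, map_sub, Complex.conj_ofReal]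
  congr 3
  · have := Complex.cpow_conj (1 + (-1) * t) ((n + a : ℝ) : ℂ) a1
    rw [Complex.conj_ofReal] at this
    rw [this]; simp
  · have := Complex.cpow_conj (1 + 1 * t) ((n + b : ℝ) : ℂ) a2
    rw [Complex.conj_ofReal] at this
    rw [this]; simp

lemma jacobiP_integral (a b : ℝ) (ha : -1 < a) (hb : -1 < b) (n : ℕ) (hn : 1 ≤ n) (x : ℝ)
    (hx : x ∈ Set.Ioo (-1 : ℝ) 1) :
    (-2) ^ n * ((1 - x) ^ a * (1 + x) ^ b) * jacobiP a b n x =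
      (1 / π) * (∫ φ in (0:ℝ)..π, jacG a b n x (Complex.exp (φ * Complex.I))).re := by
  have hw : (x:ℂ) ∈ ball (0:ℂ) 1 := by
    simp [Complex.norm_real, abs_lt]; exact hx
  have h := jac_cauchy n (jacF_diffCont a b ha hb n hn x) hw
  rw [jacF_iteratedDeriv a b ha hb n hn x hx] at h
  have hcont := jacG_continuous a b ha hb n hn x hx
  set R := (-2) ^ n * ((1 - x) ^ a * (1 + x) ^ b) * jacobiP a b n x
  have h1 : (∮ z in C(0, 1), jacF a b n x z * (z - x) ^ (-(n:ℤ) - 1)) =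
      Complex.I * ∫ φ in (0:ℝ)..(2 * π), jacG a b n x (Complex.exp (φ * Complex.I)) := by
    rw [circleIntegral, ← intervalIntegral.integral_const_mul]
    congr 1; ext φ
    simp [circleMap, jacG]
    ring
  have h2 : (∫ φ in (0:ℝ)..(2 * π), jacG a b n x (Complex.exp (φ * Complex.I))) =
      (∫ φ in (0:ℝ)..π, jacG a b n x (Complex.exp (φ * Complex.I))) +
      (starRingEnd ℂ) (∫ φ in (0:ℝ)..π, jacG a b n x (Complex.exp (φ * Complex.I))) := by
    rw [← intervalIntegral.integral_add_adjacent_intervals (b := π)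
      (hcont.intervalIntegrable _ _) (hcont.intervalIntegrable _ _)]
    congr 1
    rw [← intervalIntegral_conj]
    have e1 : ∫ φ in (0:ℝ)..π, (starRingEnd ℂ) (jacG a b n x (Complex.exp (φ * Complex.I))) =
        ∫ φ in (0:ℝ)..π, jacG a b n x (Complex.exp ((2 * π - φ : ℝ) * Complex.I)) := by
      refine intervalIntegral.integral_congr_ae ?_
      have : ∀ᵐ φ : ℝ, φ ≠ π := by simp [ae_iff]
      filter_upwards [this] with φ hne hφ
      rw [Set.uIoc_of_le Real.pi_pos.le] at hφ
      rw [← jacG_conj a b n x φ ⟨hφ.1, lt_of_le_of_ne hφ.2 hne⟩]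
      congr 1
      rw [Complex.exp_eq_exp_iff_exists_int]
      exact ⟨-1, by push_cast; ring⟩
    rw [e1, intervalIntegral.integral_comp_sub_left (fun φ : ℝ => jacG a b n x (Complex.exp (φ * Complex.I)))]
    congr 1 <;> ring
  rw [h1, h2] at h
  set J := ∫ φ in (0:ℝ)..π, jacG a b n x (Complex.exp (φ * Complex.I))
  have h3 : J + (starRingEnd ℂ) J = ((2 * π * R : ℝ) : ℂ) := by
    have : Complex.I * (J + (starRingEnd ℂ) J) = Complex.I * ((2 * π * R : ℝ) : ℂ) := by
      rw [h]; push_cast; ring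
    exact mul_left_cancel₀ Complex.I_ne_zero this
  have h4 := congrArg Complex.re h3
  simp at h4
  have := Real.pi_pos
  field_simp
  linarith

end Repr

section Phase
open Complex (I exp)

noncomputable def jacA (θ : ℝ) (z : ℂ) : ℂ := 1 - (Real.cos θ : ℂ) * exp (-(z * I))

noncomputable def jacW (θ : ℝ) (z : ℂ) : ℂ :=
  (√2 : ℝ) * Complex.sin ((z - θ) / 2) * (jacA θ z) ^ (-(1/2) : ℂ)

noncomputable def jacW1 (θ : ℝ) (z : ℂ) : ℂ :=
  (√2 : ℝ) * (Complex.cos ((z - θ) / 2) * (1 / 2)) * (jacA θ z) ^ (-(1/2) : ℂ) +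
  (√2 : ℝ) * Complex.sin ((z - θ) / 2) *
    (-(1/2) * (jacA θ z) ^ (-(1/2) - 1 : ℂ) * ((Real.cos θ : ℂ) * exp (-(z * I)) * I))

noncomputable def jacg (a b : ℝ) (θ : ℝ) (z : ℂ) : ℂ :=
  (1 - exp (z * I)) ^ (a : ℂ) * (1 + exp (z * I)) ^ (b : ℂ) * (jacA θ z)⁻¹

lemma jacA_hasDerivAt (θ : ℝ) (z : ℂ) :
    HasDerivAt (jacA θ) ((Real.cos θ : ℂ) * exp (-(z * I)) * I) z := by
  have h1 : HasDerivAt (fun z : ℂ => -(z * I)) (-I) z := by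
    simpa using ((hasDerivAt_id z).mul_const I).fun_neg
  have h2 := (h1.cexp.const_mul (Real.cos θ : ℂ)).const_sub 1
  unfold jacA
  exact h2.congr_deriv (by ring)

lemma jacW_hasDerivAt (θ : ℝ) (z : ℂ) (hz : jacA θ z ∈ Complex.slitPlane) :
    HasDerivAt (jacW θ) (jacW1 θ z) z := by
  have h1 : HasDerivAt (fun z : ℂ => (z - θ) / 2) (1 / 2) z :=
    ((hasDerivAt_id z).sub_const _).div_const 2
  have h2 := (h1.csin.const_mul ((√2 : ℝ) : ℂ)).mul ((jacA_hasDerivAt θ z).cpow_const (c := -(1/2)) hz)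
  exact h2

lemma jacW_sq (θ : ℝ) (z : ℂ) (hz : jacA θ z ≠ 0) :
    jacW θ z ^ 2 = (1 - Complex.cos (z - θ)) / jacA θ z := by
  have h1 : ((jacA θ z) ^ (-(1/2) : ℂ)) ^ 2 = (jacA θ z)⁻¹ := by
    rw [← Complex.cpow_nat_mul]
    norm_num [Complex.cpow_neg_one]
  have h2 : (((√2 : ℝ) : ℂ)) ^ 2 = 2 := by
    rw [← Complex.ofReal_pow, Real.sq_sqrt (by norm_num)]; norm_num
  have h3 : Complex.cos (z - θ) = 1 - 2 * Complex.sin ((z - θ) / 2) ^ 2 := by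
    have := Complex.cos_two_mul ((z - θ) / 2)
    have h4 := Complex.sin_sq_add_cos_sq ((z - θ) / 2)
    rw [show 2 * ((z - (θ:ℂ)) / 2) = z - θ by ring] at this
    rw [this]; linear_combination 2 * h4
  rw [jacW, mul_pow, mul_pow, h1, h2, h3]
  rw [div_eq_mul_inv]; ring

lemma jac_one_sub_W_sq (θ : ℝ) (z : ℂ) (hz : jacA θ z ≠ 0) :
    1 - jacW θ z ^ 2 =
      (exp (z * I) ^ 2 - 1) / (2 * exp (θ * I) * (exp (z * I) - Real.cos θ)) := by
  have e1 : exp (z * I) ≠ 0 := Complex.exp_ne_zero _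
  have e2 : exp (θ * I) ≠ 0 := Complex.exp_ne_zero _
  have hA : jacA θ z = (exp (z * I) - Real.cos θ) / exp (z * I) := by
    rw [jacA, Complex.exp_neg]; field_simp
  have hne : exp (z * I) - Real.cos θ ≠ 0 := by
    intro h; rw [hA, h] at hz; simp at hz
  have hx : (Real.cos θ : ℂ) = (exp (θ * I) + (exp (θ * I))⁻¹) / 2 := by
    rw [Complex.ofReal_cos, Complex.cos, ← Complex.exp_neg]; ring_nf
  have hc : Complex.cos (z - θ) = (exp (z * I) / exp (θ * I) + exp (θ * I) / exp (z * I)) / 2 := by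
    rw [Complex.cos, ← Complex.exp_sub, ← Complex.exp_sub]; ring_nf
  rw [jacW_sq θ z hz, hA]
  rw [hc]
  rw [eq_div_iff (mul_ne_zero (mul_ne_zero two_ne_zero e2) hne)]
  field_simp
  rw [hx]
  field_simp
  ring

lemma jacA_re_pos (θ : ℝ) (hθ : θ ∈ Set.Ioo 0 π) (φ : ℝ) : 0 < (jacA θ φ).re := by
  have hcos : -1 < Real.cos θ ∧ Real.cos θ < 1 := by
    constructor
    · rw [← Real.cos_pi]; exact Real.cos_lt_cos_of_nonneg_of_le_pi hθ.1.le le_rfl hθ.2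
    · rw [← Real.cos_zero]; exact Real.cos_lt_cos_of_nonneg_of_le_pi le_rfl hθ.2.le hθ.1
  have h1 : ‖(Real.cos θ : ℂ) * exp (-((φ:ℂ) * I))‖ < 1 := by
    rw [norm_mul, show -((φ:ℂ) * I) = ((-φ : ℝ) : ℂ) * I by push_cast; ring,
      Complex.norm_exp_ofReal_mul_I, mul_one, Complex.norm_real, Real.norm_eq_abs, abs_lt]
    exact hcos
  have h2 := Complex.re_le_norm ((Real.cos θ : ℂ) * exp (-((φ:ℂ) * I)))
  rw [jacA, Complex.sub_re, Complex.one_re]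
  linarith

lemma jacA_slit (θ : ℝ) (hθ : θ ∈ Set.Ioo 0 π) (φ : ℝ) : jacA θ φ ∈ Complex.slitPlane :=
  Or.inl (jacA_re_pos θ hθ φ)

lemma jacA_ne (θ : ℝ) (hθ : θ ∈ Set.Ioo 0 π) (φ : ℝ) : jacA θ φ ≠ 0 :=
  Complex.slitPlane_ne_zero (jacA_slit θ hθ φ)

lemma jacG_eq (a b : ℝ) (n : ℕ) (θ : ℝ) (hθ : θ ∈ Set.Ioo 0 π) (φ : ℝ) (hφ : φ ∈ Set.Ioo 0 π) :
    jacG a b n (Real.cos θ) (exp (φ * I)) =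
      (-2) ^ n * exp (θ * I) ^ n * ((1 - jacW θ φ ^ 2) ^ n * jacg a b θ φ) := by
  have hA0 := jacA_ne θ hθ φ
  have e1 : exp (φ * I) ≠ 0 := Complex.exp_ne_zero _
  have e2 : exp (θ * I) ≠ 0 := Complex.exp_ne_zero _
  have hA : jacA θ φ = (exp (φ * I) - Real.cos θ) / exp (φ * I) := by
    rw [jacA, Complex.exp_neg]; field_simp
  have hne : exp (φ * I) - Real.cos θ ≠ 0 := by
    intro h; rw [hA, h] at hA0; simp at hA0
  have him : (exp (φ * I)).im ≠ 0 := by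
    rw [Complex.exp_ofReal_mul_I_im]; exact (Real.sin_pos_of_mem_Ioo hφ).ne'
  rw [jac_one_sub_W_sq θ φ hA0, jacg, hA]
  set t := exp (φ * I)
  have n1 : 1 - t ≠ 0 := by
    intro h; apply him
    have := congrArg Complex.im h; simpa using this
  have n2 : 1 + t ≠ 0 := by
    intro h; apply him
    have := congrArg Complex.im h; simpa using this
  rw [jacG, jacF, show 1 + (-1) * t = 1 - t by ring, one_mul]
  simp only [Complex.ofReal_add, Complex.ofReal_natCast]
  rw [Complex.cpow_add _ _ n1, Complex.cpow_add _ _ n2, Complex.cpow_natCast, Complex.cpow_natCast]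
  rw [show t ^ 2 - 1 = (-1) * ((1 - t) * (1 + t)) by ring]
  have h3 : (t - ((Real.cos θ : ℝ) : ℂ)) ^ (-(n:ℤ) - 1) = ((t - Real.cos θ) ^ n)⁻¹ * (t - Real.cos θ)⁻¹ := by
    rw [zpow_sub_one₀ hne, zpow_neg, zpow_natCast]
  rw [h3]
  simp only [div_pow, mul_pow]
  rw [show (-2 : ℂ) ^ n = (-1) ^ n * 2 ^ n by rw [← mul_pow]; norm_num]
  have hm : ((-1 : ℂ) ^ n) * (-1) ^ n = 1 := by rw [← mul_pow]; norm_num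
  set u := t - ((Real.cos θ : ℝ) : ℂ) with hu
  field_simp
  rw [← pow_mul, mul_comm n 2, pow_mul]; norm_num

lemma jacW_zero (θ : ℝ) (hθ : θ ∈ Set.Ioo 0 π) : jacW θ (0:ℝ) = -1 := by
  have hs : 0 < Real.sin (θ / 2) := Real.sin_pos_of_pos_of_lt_pi (by linarith [hθ.1]) (by linarith [hθ.1, hθ.2])
  have hA : jacA θ (0:ℝ) = ((2 * Real.sin (θ / 2) ^ 2 : ℝ) : ℂ) := by
    have h := Real.cos_two_mul (θ / 2)
    have h' := Real.sin_sq_add_cos_sq (θ / 2)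
    rw [show 2 * (θ / 2) = θ by ring] at h
    rw [jacA, h]; push_cast; simp
    have := congrArg (fun r : ℝ => (r:ℂ)) h'
    push_cast at this
    linear_combination (-2) * this
  have e : (√2 : ℝ) * Real.sin (-θ / 2) * (2 * Real.sin (θ / 2) ^ 2) ^ (-(1/2) : ℝ) = -1 := by
    rw [Real.rpow_neg (by positivity), ← Real.sqrt_eq_rpow, Real.sqrt_mul (by norm_num), Real.sqrt_sq hs.le,
      neg_div, Real.sin_neg]
    have : √2 ≠ 0 := by positivity
    field_simp
  rw [jacW, hA]
  have := congrArg (fun r : ℝ => (r:ℂ)) e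
  rw [Complex.ofReal_mul, Complex.ofReal_mul, Complex.ofReal_cpow (by positivity)] at this
  push_cast at this ⊢
  simpa using this

lemma jacW_pi (θ : ℝ) (hθ : θ ∈ Set.Ioo 0 π) : jacW θ (π:ℝ) = 1 := by
  have hs : 0 < Real.cos (θ / 2) := Real.cos_pos_of_mem_Ioo ⟨by linarith [hθ.1, hθ.2], by linarith [hθ.1, hθ.2]⟩
  have hA : jacA θ (π:ℝ) = ((2 * Real.cos (θ / 2) ^ 2 : ℝ) : ℂ) := by
    have h := Real.cos_two_mul (θ / 2)
    rw [show 2 * (θ / 2) = θ by ring] at h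
    rw [jacA, h, Complex.exp_neg, Complex.exp_pi_mul_I]; push_cast; ring
  have e : (√2 : ℝ) * Real.sin ((π - θ) / 2) * (2 * Real.cos (θ / 2) ^ 2) ^ (-(1/2) : ℝ) = 1 := by
    rw [Real.rpow_neg (by positivity), ← Real.sqrt_eq_rpow, Real.sqrt_mul (by norm_num), Real.sqrt_sq hs.le,
      sub_div, Real.sin_pi_div_two_sub]
    have : √2 ≠ 0 := by positivity
    field_simp
  rw [jacW, hA]
  have := congrArg (fun r : ℝ => (r:ℂ)) e
  rw [Complex.ofReal_mul, Complex.ofReal_mul, Complex.ofReal_cpow (by positivity)] at this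
  push_cast at this ⊢
  exact this

lemma jacW_contOn (θ : ℝ) (hθ : θ ∈ Set.Ioo 0 π) : Continuous fun φ : ℝ => jacW θ φ := by
  rw [continuous_iff_continuousAt]
  intro φ
  exact ContinuousAt.comp (f := fun φ : ℝ => (φ:ℂ)) (jacW_hasDerivAt θ φ (jacA_slit θ hθ φ)).continuousAt (by fun_prop)

lemma jacW1_cont (θ : ℝ) (hθ : θ ∈ Set.Ioo 0 π) : Continuous fun φ : ℝ => jacW1 θ φ := by
  have hA : Continuous fun φ : ℝ => jacA θ φ := by unfold jacA; fun_prop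
  have hp : ∀ c : ℂ, Continuous fun φ : ℝ => (jacA θ φ) ^ c := fun c =>
    hA.cpow continuous_const (fun φ => jacA_slit θ hθ φ)
  unfold jacW1
  have := hp (-(1/2)); have := hp (-(1/2) - 1)
  fun_prop

/-- antiderivative of `(1 - z^2)^n` -/
noncomputable def jacPrim (n : ℕ) (z : ℂ) : ℂ :=
  ∑ k ∈ Finset.range (n + 1), (n.choose k : ℂ) * (-1) ^ k * (z ^ (2 * k + 1) / (2 * k + 1))

lemma jacPrim_hasDerivAt (n : ℕ) (z : ℂ) : HasDerivAt (jacPrim n) ((1 - z ^ 2) ^ n) z := by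
  have h : HasDerivAt (jacPrim n) (∑ k ∈ Finset.range (n + 1), (n.choose k : ℂ) * (-1) ^ k * z ^ (2 * k)) z := by
    unfold jacPrim
    refine HasDerivAt.fun_sum fun k _ => ?_
    refine HasDerivAt.const_mul _ ?_
    have := (hasDerivAt_pow (2 * k + 1) z).div_const (2 * k + 1 : ℂ)
    convert this using 1
    have : (2 * k + 1 : ℂ) ≠ 0 := by exact_mod_cast (Nat.succ_ne_zero (2 * k))
    push_cast
    field_simp
  convert h using 1
  rw [sub_eq_add_neg, add_comm, add_pow]
  refine Finset.sum_congr rfl fun k _ => ?_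
  rw [neg_pow (z ^ 2), ← pow_mul]; ring

lemma jac_integral_W1 (n : ℕ) (θ : ℝ) (hθ : θ ∈ Set.Ioo 0 π) :
    ∫ φ in (0:ℝ)..π, (1 - jacW θ φ ^ 2) ^ n * jacW1 θ φ =
      ((∫ s in (-1:ℝ)..1, (1 - s ^ 2) ^ n : ℝ) : ℂ) := by
  have h1 : ∫ φ in (0:ℝ)..π, (1 - jacW θ φ ^ 2) ^ n * jacW1 θ φ =
      jacPrim n (jacW θ (π:ℝ)) - jacPrim n (jacW θ (0:ℝ)) := by
    refine intervalIntegral.integral_eq_sub_of_hasDerivAt (f := fun φ : ℝ => jacPrim n (jacW θ φ)) (fun φ _ => ?_) ?_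
    · have := (jacPrim_hasDerivAt n (jacW θ φ)).comp (φ:ℂ) (jacW_hasDerivAt θ φ (jacA_slit θ hθ φ))
      exact this.comp_ofReal
    · have := jacW_contOn θ hθ; have := jacW1_cont θ hθ
      exact Continuous.intervalIntegrable (by fun_prop) _ _
  have h2 : ∫ s in (-1:ℝ)..1, ((((1 - s ^ 2) ^ n : ℝ)) : ℂ) = jacPrim n (1:ℝ) - jacPrim n (-1:ℝ) := by
    refine intervalIntegral.integral_eq_sub_of_hasDerivAt (f := fun s : ℝ => jacPrim n s) (fun φ _ => ?_) ?_
    · have := (jacPrim_hasDerivAt n φ).comp_ofReal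
      push_cast; exact this
    · exact Continuous.intervalIntegrable (by fun_prop) _ _
  rw [h1, jacW_pi θ hθ, jacW_zero θ hθ, ← intervalIntegral.integral_ofReal, h2]
  simp

lemma jac_integral_WW1 (n : ℕ) (θ : ℝ) (hθ : θ ∈ Set.Ioo 0 π) :
    ∫ φ in (0:ℝ)..π, (1 - jacW θ φ ^ 2) ^ n * (jacW θ φ * jacW1 θ φ) = 0 := by
  have h1 : ∫ φ in (0:ℝ)..π, (1 - jacW θ φ ^ 2) ^ n * (jacW θ φ * jacW1 θ φ) =
      (-(1 - jacW θ (π:ℝ) ^ 2) ^ (n + 1) / (2 * (n + 1))) - (-(1 - jacW θ (0:ℝ) ^ 2) ^ (n + 1) / (2 * (n + 1))) := by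
    refine intervalIntegral.integral_eq_sub_of_hasDerivAt
      (f := fun φ : ℝ => -(1 - jacW θ φ ^ 2) ^ (n + 1) / (2 * (n + 1))) (fun φ _ => ?_) ?_
    · have h := jacW_hasDerivAt θ φ (jacA_slit θ hθ φ)
      have := ((((h.fun_pow 2).const_sub 1).fun_pow (n + 1)).fun_neg.div_const (2 * (n + 1) : ℂ)).comp_ofReal
      refine this.congr_deriv ?_
      have : (n + 1 : ℂ) ≠ 0 := by exact_mod_cast Nat.succ_ne_zero n
      push_cast
      field_simp
    · have := jacW_contOn θ hθ; have := jacW1_cont θ hθ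
      exact Continuous.intervalIntegrable (by fun_prop) _ _
  rw [h1, jacW_pi θ hθ, jacW_zero θ hθ]
  simp

end Phase

section Aux

lemma jac_B_sq (n : ℕ) : (∫ s in (-1:ℝ)..1, (1 - s ^ 2) ^ n) ^ 2 = 4 * Real.Wallis.W n / (2 * n + 1) := by
  have h1 : ∫ s in (-1:ℝ)..1, (1 - s ^ 2) ^ n = ∫ x in (0:ℝ)..π, Real.sin x ^ (2 * n + 1) := by
    have := integral_sin_pow_odd_mul_cos_pow (a := 0) (b := π) n 0
    simp at this
    rw [this]
  rw [h1, integral_sin_pow_odd, mul_pow, ← Finset.prod_pow, Real.Wallis.W]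
  have h2 : (∏ i ∈ Finset.range n, ((2 * (i:ℝ) + 2) / (2 * i + 3)) ^ 2) =
      (∏ i ∈ Finset.range n, (2 * (i:ℝ) + 2) / (2 * i + 1) * ((2 * i + 2) / (2 * i + 3))) / (2 * n + 1) := by
    induction n with
    | zero => simp
    | succ n ih =>
      have ih' := ih (by
        have := integral_sin_pow_odd_mul_cos_pow (a := 0) (b := π) n 0
        simp at this
        rw [this])
      rw [Finset.prod_range_succ, Finset.prod_range_succ, ih']
      push_cast
      field_simp
      ring
  rw [h2]; ring

lemma jac_B (n : ℕ) (hn : 1 ≤ n) :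
    |(∫ s in (-1:ℝ)..1, (1 - s ^ 2) ^ n) - √(π / n)| ≤ √π * (n:ℝ) ^ (-(3:ℝ)/2) := by
  have hn' : (1:ℝ) ≤ n := by exact_mod_cast hn
  have hn0 : (0:ℝ) < n := by linarith
  have hpi := Real.pi_pos
  set B := ∫ s in (-1:ℝ)..1, (1 - s ^ 2) ^ n
  have hB0 : 0 ≤ B := by
    refine intervalIntegral.integral_nonneg (by norm_num) fun s hs => ?_
    have : 0 ≤ 1 - s ^ 2 := by nlinarith [hs.1, hs.2]
    positivity
  have hsq : B ^ 2 = 4 * Real.Wallis.W n / (2 * n + 1) := jac_B_sq n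
  have u := Real.Wallis.W_le n
  have l := Real.Wallis.le_W n
  have hup : B ≤ √(π / n) := by
    apply Real.le_sqrt_of_sq_le
    rw [hsq, div_le_div_iff₀ (by linarith) hn0]
    nlinarith
  have hlo : √(π / (n + 1)) ≤ B := by
    rw [← Real.sqrt_sq hB0]
    apply Real.sqrt_le_sqrt
    rw [hsq]
    have : 4 * ((2 * (n:ℝ) + 1) / (2 * n + 2) * (π / 2)) / (2 * n + 1) ≤ 4 * Real.Wallis.W n / (2 * n + 1) := by
      gcongr
    refine le_trans (le_of_eq ?_) this
    field_simp
    ring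
  have hdiff : √(π / n) - √(π / (n + 1)) ≤ √π * (n:ℝ) ^ (-(3:ℝ)/2) := by
    rw [Real.sqrt_div hpi.le, Real.sqrt_div hpi.le]
    have e : (n:ℝ) ^ (-(3:ℝ)/2) = 1 / √n * (1 / n) := by
      rw [show -(3:ℝ)/2 = -(1/2) + (-1) by norm_num, Real.rpow_add hn0, Real.rpow_neg hn0.le,
        ← Real.sqrt_eq_rpow, Real.rpow_neg_one]
      simp
    have s1 : 0 < √(n:ℝ) := Real.sqrt_pos.2 hn0
    have s2 : 0 < √((n:ℝ) + 1) := Real.sqrt_pos.2 (by linarith)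
    have q1 := Real.sq_sqrt hn0.le
    have q2 := Real.sq_sqrt (show (0:ℝ) ≤ n + 1 by linarith)
    have hle : √(n:ℝ) ≤ √((n:ℝ) + 1) := Real.sqrt_le_sqrt (by linarith)
    have key : 1 / √(n:ℝ) - 1 / √((n:ℝ)+1) ≤ 1 / √n * (1 / n) := by
      have : 1 - √(n:ℝ) / √((n:ℝ)+1) ≤ 1 / n := by
        have h1 : (n:ℝ) / (n + 1) ≤ √(n:ℝ) / √((n:ℝ)+1) := by
          rw [div_le_div_iff₀ (by linarith) s2]
          nlinarith [mul_le_mul_of_nonneg_left hle (mul_nonneg s1.le s2.le)]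
        have h2 : 1 - (n:ℝ) / (n + 1) ≤ 1 / n := by
          have : 1 - (n:ℝ) / (n + 1) = 1 / (n + 1) := by field_simp; ring
          rw [this]
          exact one_div_le_one_div_of_le hn0 (by linarith)
        linarith
      have h3 : 1 / √(n:ℝ) - 1 / √((n:ℝ)+1) = 1 / √n * (1 - √(n:ℝ) / √((n:ℝ)+1)) := by
        field_simp
      rw [h3]
      gcongr
    rw [e]
    have := mul_le_mul_of_nonneg_left key (Real.sqrt_nonneg π)
    calc _ = √π * (1 / √(n:ℝ) - 1 / √((n:ℝ)+1)) := by ring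
      _ ≤ _ := this
  rw [abs_le]
  constructor <;> [linarith; skip]
  have : 0 ≤ √π * (n:ℝ) ^ (-(3:ℝ)/2) := by positivity
  linarith

lemma jac_gauss (l θ : ℝ) (hl : 0 < l) :
    ∫ φ in (0:ℝ)..π, (φ - θ) ^ 2 * Real.exp (-l * (φ - θ) ^ 2) ≤ 2 / l * √(π / (l / 2)) := by
  have h1 : ∀ u : ℝ, u ^ 2 * Real.exp (-l * u ^ 2) ≤ 2 / l * Real.exp (-(l / 2) * u ^ 2) := by
    intro u
    have h := Real.add_one_le_exp (l / 2 * u ^ 2)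
    have : Real.exp (-(l/2) * u ^ 2) = Real.exp (l / 2 * u ^ 2) * Real.exp (-l * u ^ 2) := by
      rw [← Real.exp_add]; congr 1; ring
    rw [this, ← mul_assoc]
    gcongr
    calc u ^ 2 = 2 / l * (l / 2 * u ^ 2) := by field_simp
      _ ≤ 2 / l * Real.exp (l / 2 * u ^ 2) := by gcongr; linarith
  have hinteg : Integrable fun φ : ℝ => 2 / l * Real.exp (-(l / 2) * (φ - θ) ^ 2) :=
    ((integrable_exp_neg_mul_sq (half_pos hl)).comp_sub_right θ).const_mul _
  calc _ ≤ ∫ φ in (0:ℝ)..π, 2 / l * Real.exp (-(l / 2) * (φ - θ) ^ 2) := by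
        refine intervalIntegral.integral_mono_on Real.pi_pos.le ?_ ?_ fun φ _ => h1 _
        · exact Continuous.intervalIntegrable (by fun_prop) _ _
        · exact Continuous.intervalIntegrable (by fun_prop) _ _
    _ ≤ ∫ φ : ℝ, 2 / l * Real.exp (-(l / 2) * (φ - θ) ^ 2) := by
        rw [intervalIntegral.integral_of_le Real.pi_pos.le]
        exact setIntegral_le_integral hinteg (Eventually.of_forall fun φ => by positivity)
    _ = _ := by
        rw [MeasureTheory.integral_const_mul, integral_sub_right_eq_self (fun φ : ℝ => Real.exp (-(l / 2) * φ ^ 2)) θ,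
          integral_gaussian]

end Aux

section Bounds
open Complex (I exp)

lemma jacA_normSq (θ φ : ℝ) :
    ‖jacA θ φ‖ ^ 2 = Real.sin φ ^ 2 + (Real.cos φ - Real.cos θ) ^ 2 := by
  have e : jacA θ φ = ((1 - Real.cos θ * Real.cos φ : ℝ) : ℂ) + ((Real.cos θ * Real.sin φ : ℝ) : ℂ) * I := by
    unfold jacA
    have : -((φ:ℂ) * I) = ((-φ : ℝ) : ℂ) * I := by push_cast; ring
    rw [this, Complex.exp_ofReal_mul_I, Real.cos_neg, Real.sin_neg,
      Complex.ofReal_sub, Complex.ofReal_mul, Complex.ofReal_mul, Complex.ofReal_neg, Complex.ofReal_one]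
    ring
  rw [e, Complex.sq_norm, Complex.normSq_add_mul_I]
  linear_combination (Real.cos θ ^ 2 - 1) * Real.sin_sq_add_cos_sq φ

lemma jacA_norm_ge (θ φ : ℝ) : 1 - |Real.cos θ| ≤ ‖jacA θ φ‖ := by
  have h : ‖(Real.cos θ : ℂ) * exp (-((φ:ℂ) * I))‖ = |Real.cos θ| := by
    have : -((φ:ℂ) * I) = ((-φ : ℝ) : ℂ) * I := by push_cast; ring
    rw [norm_mul, this, Complex.norm_exp_ofReal_mul_I, mul_one, Complex.norm_real, Real.norm_eq_abs]
  unfold jacA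
  have := norm_sub_norm_le (1:ℂ) ((Real.cos θ : ℂ) * exp (-((φ:ℂ) * I)))
  rw [h, norm_one] at this
  exact this

lemma jac_norm_one_sub (θ φ : ℝ) (hθ : θ ∈ Set.Ioo 0 π) (hφ : φ ∈ Set.Ioo 0 π) :
    ‖1 - jacW θ φ ^ 2‖ = Real.sin φ / ‖jacA θ φ‖ := by
  have hA := jacA_ne θ hθ φ
  have hs := Real.sin_pos_of_mem_Ioo hφ
  rw [jac_one_sub_W_sq θ φ hA]
  have e1 : exp ((φ:ℂ) * I) ^ 2 - 1 = exp (φ * I) * (2 * I * (Real.sin φ : ℂ)) := by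
    have h := Complex.exp_ofReal_mul_I φ
    have h2 : exp (-((φ:ℂ) * I)) = (Real.cos φ : ℂ) - (Real.sin φ : ℂ) * I := by
      have : -((φ:ℂ) * I) = ((-φ : ℝ) : ℂ) * I := by push_cast; ring
      rw [this, Complex.exp_ofReal_mul_I, Real.cos_neg, Real.sin_neg, Complex.ofReal_neg]; ring
    have h3 : exp ((φ:ℂ) * I) * exp (-((φ:ℂ) * I)) = 1 := by rw [← Complex.exp_add]; simp
    have h4 : 2 * I * (Real.sin φ : ℂ) = exp ((φ:ℂ) * I) - exp (-((φ:ℂ) * I)) := by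
      rw [h, h2]; ring
    rw [h4, mul_sub, h3]; ring
  have e2 : exp ((φ:ℂ) * I) - (Real.cos θ : ℂ) = exp (φ * I) * jacA θ φ := by
    unfold jacA
    have h3 : exp ((φ:ℂ) * I) * exp (-((φ:ℂ) * I)) = 1 := by rw [← Complex.exp_add]; simp
    linear_combination (Real.cos θ : ℂ) * h3
  rw [e1, e2]
  simp only [norm_div, norm_mul, Complex.norm_exp_ofReal_mul_I, Complex.norm_I, Complex.norm_real,
    Real.norm_eq_abs, abs_of_pos hs, Complex.norm_ofNat]
  have : 0 < ‖jacA θ φ‖ := norm_pos_iff.2 hA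
  field_simp

lemma jac_exp_bound (η : ℝ) (hη : 0 < η) (θ φ : ℝ) (hθ : θ ∈ Set.Ioo 0 π) (hφ : φ ∈ Set.Ioo 0 π)
    (h1 : η ≤ Real.sin (θ / 2)) (h2 : η ≤ Real.cos (θ / 2)) :
    ‖1 - jacW θ φ ^ 2‖ ≤ Real.exp (-(η ^ 2 / (2 * π ^ 2)) * (φ - θ) ^ 2) := by
  have hA := jacA_ne θ hθ φ
  have hA' : 0 < ‖jacA θ φ‖ := norm_pos_iff.2 hA
  have hs := Real.sin_pos_of_mem_Ioo hφ
  have hsq := jacA_normSq θ φ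
  rw [jac_norm_one_sub θ φ hθ hφ]
  have hpi := Real.pi_pos
  obtain ⟨hφ0, hφ1⟩ := hφ
  obtain ⟨hθ0, hθ1⟩ := hθ
  -- lower bound for difference of cosines
  have hd : (η * |φ - θ| * 2 / π) ^ 2 ≤ (Real.cos φ - Real.cos θ) ^ 2 := by
    have e : Real.cos φ - Real.cos θ = -2 * Real.sin ((φ + θ) / 2) * Real.sin ((φ - θ) / 2) :=
      Real.cos_sub_cos φ θ
    have s1 : η ≤ Real.sin ((φ + θ) / 2) := by
      have e3 : Real.sin ((φ + θ) / 2) = Real.sin (φ / 2) * Real.cos (θ / 2) + Real.cos (φ / 2) * Real.sin (θ / 2) := by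
        rw [← Real.sin_add]; congr 1; ring
      have p1 : 0 < Real.sin (φ / 2) := Real.sin_pos_of_pos_of_lt_pi (by linarith) (by linarith)
      have p2 : 0 < Real.cos (φ / 2) := Real.cos_pos_of_mem_Ioo ⟨by linarith, by linarith⟩
      have p3 : 1 ≤ Real.sin (φ / 2) + Real.cos (φ / 2) := by
        nlinarith [Real.sin_sq_add_cos_sq (φ / 2), mul_pos p1 p2]
      rw [e3]
      nlinarith [mul_le_mul_of_nonneg_left h2 p1.le, mul_le_mul_of_nonneg_left h1 p2.le]
    have s2 : |φ - θ| / π ≤ |Real.sin ((φ - θ) / 2)| := by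
      have hm : |(φ - θ) / 2| ≤ π / 2 := by rw [abs_le]; constructor <;> linarith
      have := Real.mul_abs_le_abs_sin hm
      calc |φ - θ| / π = 2 / π * |(φ - θ) / 2| := by
            rw [abs_div, abs_of_pos (by norm_num : (0:ℝ) < 2)]; field_simp
        _ ≤ _ := this
    have : η * |φ - θ| * 2 / π ≤ |Real.cos φ - Real.cos θ| := by
      rw [e, abs_mul, abs_mul, abs_of_pos (lt_of_lt_of_le hη s1), abs_neg, abs_of_pos (by norm_num : (0:ℝ) < 2)]
      calc η * |φ - θ| * 2 / π = 2 * η * (|φ - θ| / π) := by ring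
        _ ≤ _ := by
          have := hη.le.trans s1
          gcongr
    rw [← sq_abs (Real.cos φ - Real.cos θ)]
    gcongr
  have hd' : 4 * (η ^ 2 / π ^ 2 * (φ - θ) ^ 2) ≤ (Real.cos φ - Real.cos θ) ^ 2 := by
    calc _ = (η * |φ - θ| * 2 / π) ^ 2 := by
          rw [div_pow, mul_pow, mul_pow, sq_abs]; ring
      _ ≤ _ := hd
  have h4 : ‖jacA θ φ‖ ^ 2 ≤ 4 := by
    rw [hsq]
    nlinarith [Real.sin_sq_add_cos_sq φ, Real.sin_sq_add_cos_sq θ, sq_nonneg (Real.cos φ + Real.cos θ), Real.cos_sq_le_one φ, Real.cos_sq_le_one θ, Real.cos_le_one φ, Real.neg_one_le_cos φ, Real.cos_le_one θ, Real.neg_one_le_cos θ]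
  set u := η ^ 2 / π ^ 2 * (φ - θ) ^ 2 with hu
  have hu0 : 0 ≤ u := by positivity
  have key : (Real.sin φ / ‖jacA θ φ‖) ^ 2 ≤ 1 - u := by
    rw [div_pow, div_le_iff₀ (by positivity)]
    nlinarith
  have e5 : Real.exp (-(η ^ 2 / (2 * π ^ 2)) * (φ - θ) ^ 2) ^ 2 = Real.exp (-u) := by
    rw [← Real.exp_nat_mul]; congr 1; rw [hu]; push_cast; field_simp
  refine le_of_sq_le_sq ?_ (Real.exp_pos _).le
  rw [e5]
  have := Real.add_one_le_exp (-u)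
  linarith

lemma jac_norm_one_sub_exp (φ : ℝ) (hφ : φ ∈ Set.Ioo 0 π) :
    1 - exp ((φ:ℂ) * I) = ((2 * Real.sin (φ / 2) : ℝ) : ℂ) * exp (((φ - π) / 2 : ℝ) * I) := by
  rw [Complex.exp_ofReal_mul_I, Complex.exp_ofReal_mul_I]
  have e1 : Real.cos ((φ - π) / 2) = Real.sin (φ / 2) := by
    rw [← Real.cos_pi_div_two_sub, ← Real.cos_neg]; congr 1; ring
  have e2 : Real.sin ((φ - π) / 2) = - Real.cos (φ / 2) := by
    rw [← Real.sin_pi_div_two_sub, ← Real.sin_neg]; congr 1; ring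
  rw [e1, e2]
  have e3 : Real.cos φ = 1 - 2 * Real.sin (φ / 2) ^ 2 := by
    have := Real.cos_two_mul (φ / 2)
    rw [show 2 * (φ / 2) = φ by ring] at this
    nlinarith [Real.sin_sq_add_cos_sq (φ / 2)]
  have e4 : Real.sin φ = 2 * Real.sin (φ / 2) * Real.cos (φ / 2) := by
    have := Real.sin_two_mul (φ / 2)
    rwa [show 2 * (φ / 2) = φ by ring] at this
  apply Complex.ext <;> simp only [Complex.sub_re, Complex.sub_im, Complex.add_re, Complex.add_im, Complex.mul_re, Complex.mul_im, Complex.ofReal_re, Complex.ofReal_im, Complex.I_re, Complex.I_im, Complex.one_re, Complex.one_im, e3, e4] <;> ring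

lemma jac_norm_one_add_exp (φ : ℝ) (hφ : φ ∈ Set.Ioo 0 π) :
    1 + exp ((φ:ℂ) * I) = ((2 * Real.cos (φ / 2) : ℝ) : ℂ) * exp ((φ / 2 : ℝ) * I) := by
  rw [Complex.exp_ofReal_mul_I, Complex.exp_ofReal_mul_I]
  have e3 : Real.cos φ = 2 * Real.cos (φ / 2) ^ 2 - 1 := by
    have := Real.cos_two_mul (φ / 2)
    rwa [show 2 * (φ / 2) = φ by ring] at this
  have e4 : Real.sin φ = 2 * Real.sin (φ / 2) * Real.cos (φ / 2) := by
    have := Real.sin_two_mul (φ / 2)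
    rwa [show 2 * (φ / 2) = φ by ring] at this
  apply Complex.ext <;> simp only [Complex.sub_re, Complex.sub_im, Complex.add_re, Complex.add_im, Complex.mul_re, Complex.mul_im, Complex.ofReal_re, Complex.ofReal_im, Complex.I_re, Complex.I_im, Complex.one_re, Complex.one_im, e3, e4] <;> ring

lemma jac_cpow_polar (r t s : ℝ) (hr : 0 < r) (h1 : -π < t) (h2 : t ≤ π) :
    ((r : ℂ) * exp ((t : ℝ) * I)) ^ (s : ℂ) = ((r ^ s : ℝ) : ℂ) * exp ((s * t : ℝ) * I) := by
  have hne : (r : ℂ) * exp ((t : ℝ) * I) ≠ 0 :=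
    mul_ne_zero (by exact_mod_cast hr.ne') (Complex.exp_ne_zero _)
  have hlog : Complex.log ((r : ℂ) * exp ((t : ℝ) * I)) = Real.log r + t * I := by
    rw [Complex.log_ofReal_mul hr (Complex.exp_ne_zero _), Complex.log_exp] <;> simp [h1, h2]
  rw [Complex.cpow_def_of_ne_zero hne, hlog, Real.rpow_def_of_pos hr, add_mul, Complex.exp_add]
  push_cast
  congr 2
  ring

lemma jac_g_norm (a b θ φ : ℝ) (hφ : φ ∈ Set.Ioo 0 π) :
    ‖jacg a b θ φ‖ = (2 * Real.sin (φ / 2)) ^ a * (2 * Real.cos (φ / 2)) ^ b / ‖jacA θ φ‖ := by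
  obtain ⟨hφ0, hφ1⟩ := hφ
  have p1 : 0 < Real.sin (φ / 2) := Real.sin_pos_of_pos_of_lt_pi (by linarith) (by linarith)
  have p2 : 0 < Real.cos (φ / 2) := Real.cos_pos_of_mem_Ioo ⟨by linarith, by linarith⟩
  unfold jacg
  rw [jac_norm_one_sub_exp φ ⟨hφ0, hφ1⟩, jac_norm_one_add_exp φ ⟨hφ0, hφ1⟩,
    jac_cpow_polar _ _ _ (by positivity) (by linarith) (by linarith),
    jac_cpow_polar _ _ _ (by positivity) (by linarith) (by linarith)]
  simp only [norm_mul, norm_inv, Complex.norm_exp_ofReal_mul_I, Complex.norm_real, Real.norm_eq_abs,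
    mul_one]
  rw [abs_of_pos (by positivity), abs_of_pos (by positivity)]
  rfl

lemma jac_Wg_bound (a b : ℝ) (ha : -1 < a) (hb : -1 < b) (η : ℝ) (hη : 0 < η) (θ φ : ℝ)
    (hθ : θ ∈ Set.Ioo 0 π) (hφ : φ ∈ Set.Ioo 0 π) (h : η ≤ 1 - |Real.cos θ|) :
    ‖1 - jacW θ φ ^ 2‖ * ‖jacg a b θ φ‖ ≤ 2 ^ (a + 1) * 2 ^ (b + 1) / η ^ 2 := by
  rw [jac_norm_one_sub θ φ hθ hφ, jac_g_norm a b θ φ hφ]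
  obtain ⟨hφ0, hφ1⟩ := hφ
  have p1 : 0 < Real.sin (φ / 2) := Real.sin_pos_of_pos_of_lt_pi (by linarith) (by linarith)
  have p2 : 0 < Real.cos (φ / 2) := Real.cos_pos_of_mem_Ioo ⟨by linarith, by linarith⟩
  have hA := h.trans (jacA_norm_ge θ φ)
  have hA0 := hη.trans_le hA
  have e4 : Real.sin φ = 1 / 2 * ((2 * Real.sin (φ / 2)) * (2 * Real.cos (φ / 2))) := by
    have := Real.sin_two_mul (φ / 2)
    rw [show 2 * (φ / 2) = φ by ring] at this
    linarith
  have q1 : (2 * Real.sin (φ / 2)) * (2 * Real.sin (φ / 2)) ^ a ≤ 2 ^ (a + 1) := by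
    rw [mul_comm, ← Real.rpow_add_one (by positivity)]
    exact Real.rpow_le_rpow (by positivity) (by linarith [Real.sin_le_one (φ/2)]) (by linarith)
  have q2 : (2 * Real.cos (φ / 2)) * (2 * Real.cos (φ / 2)) ^ b ≤ 2 ^ (b + 1) := by
    rw [mul_comm, ← Real.rpow_add_one (by positivity)]
    exact Real.rpow_le_rpow (by positivity) (by linarith [Real.cos_le_one (φ/2)]) (by linarith)
  have q3 := mul_le_mul q1 q2 (by positivity) (by positivity)
  calc _ = (1 / 2 * ((2 * Real.sin (φ / 2)) * (2 * Real.sin (φ / 2)) ^ a * ((2 * Real.cos (φ / 2)) * (2 * Real.cos (φ / 2)) ^ b))) / ‖jacA θ φ‖ ^ 2 := by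
        rw [e4]; field_simp
    _ ≤ (2 ^ (a + 1) * 2 ^ (b + 1)) / η ^ 2 := by
        have : (0:ℝ) ≤ 2 ^ (a + 1) * 2 ^ (b + 1) := by positivity
        exact div_le_div₀ this (by linarith) (by positivity) (by gcongr)

end Bounds

section Local
open Complex (I exp)

lemma jac_double_zero (E : ℂ → ℂ) (c : ℂ) (r M : ℝ) (hr : 0 < r)
    (hd : DifferentiableOn ℂ E (Metric.ball c r)) (hM : ∀ z ∈ Metric.ball c r, ‖E z‖ ≤ M)
    (h0 : E c = 0) (h1 : deriv E c = 0) (z : ℂ) (hz : z ∈ Metric.ball c r) :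
    ‖E z‖ ≤ M / r / r * ‖z - c‖ ^ 2 := by
  have hnb : Metric.ball c r ∈ nhds c := Metric.ball_mem_nhds c hr
  have b1 : ∀ z ∈ Metric.ball c r, ‖dslope E c z‖ ≤ M / r := fun z hz =>
    Complex.norm_dslope_le_div_of_mapsTo_ball hd
      (fun y hy => by rw [h0, mem_closedBall_zero_iff]; exact hM y hy) hz
  have d1 : DifferentiableOn ℂ (dslope E c) (Metric.ball c r) :=
    (Complex.differentiableOn_dslope hnb).2 hd
  have z1 : dslope E c c = 0 := by rw [dslope_same, h1]
  have b2 : ‖dslope (dslope E c) c z‖ ≤ M / r / r :=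
    Complex.norm_dslope_le_div_of_mapsTo_ball d1
      (fun y hy => by rw [z1, mem_closedBall_zero_iff]; exact b1 y hy) hz
  have e1 : E z = (z - c) * dslope E c z := by
    have := sub_smul_dslope E c z
    rw [h0, sub_zero, smul_eq_mul] at this
    exact this.symm
  have e2 : dslope E c z = (z - c) * dslope (dslope E c) c z := by
    have := sub_smul_dslope (dslope E c) c z
    rw [z1, sub_zero, smul_eq_mul] at this
    exact this.symm
  rw [e1, e2, norm_mul, norm_mul]
  calc _ = ‖dslope (dslope E c) c z‖ * ‖z - c‖ ^ 2 := by ring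
    _ ≤ _ := by gcongr

lemma jac_local_abs (f w w1 : ℂ → ℂ) (c : ℂ) (r M : ℝ) (hr : 0 < r) (hM0 : 0 ≤ M)
    (hf : DifferentiableOn ℂ f (Metric.ball c r)) (hw : DifferentiableOn ℂ w (Metric.ball c r))
    (hw1 : DifferentiableOn ℂ w1 (Metric.ball c r))
    (bf : ∀ z ∈ Metric.ball c r, ‖f z‖ ≤ M) (bw : ∀ z ∈ Metric.ball c r, ‖w z‖ ≤ M)
    (bw1 : ∀ z ∈ Metric.ball c r, ‖w1 z‖ ≤ M)
    (hw0 : w c = 0) (hwd : HasDerivAt w (w1 c) c) (hlow : 1 / 2 ≤ ‖w1 c‖) :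
    ∃ d : ℂ, ‖d‖ ≤ 4 * ((M + 2 * M * M) / r) ∧ ∀ z ∈ Metric.ball c r,
      ‖f z - f c / w1 c * w1 z - d * (w z * w1 z)‖ ≤
        (M + 2 * M * M + 4 * ((M + 2 * M * M) / r) * (M * M)) / r / r * ‖z - c‖ ^ 2 := by
  have hcb : c ∈ Metric.ball c r := Metric.mem_ball_self hr
  have hnb : Metric.ball c r ∈ nhds c := Metric.ball_mem_nhds c hr
  have hne : w1 c ≠ 0 := fun h => by rw [h, norm_zero] at hlow; norm_num at hlow
  have hpos : 0 < ‖w1 c‖ := norm_pos_iff.2 hne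
  have hcn : ‖f c / w1 c‖ ≤ 2 * M := by
    rw [norm_div, div_le_iff₀ hpos]
    nlinarith [bf c hcb]
  set Q : ℂ → ℂ := fun z => f z - f c / w1 c * w1 z with hQ
  have hQd : DifferentiableOn ℂ Q (Metric.ball c r) := hf.sub (hw1.const_mul _)
  have hQ0 : Q c = 0 := by simp only [hQ]; field_simp; ring
  have bQ : ∀ z ∈ Metric.ball c r, ‖Q z‖ ≤ M + 2 * M * M := fun z hz => by
    refine (norm_sub_le _ _).trans ?_
    rw [norm_mul]
    exact add_le_add (bf z hz) (mul_le_mul hcn (bw1 z hz) (norm_nonneg _) (by positivity))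
  have bQ' : ‖deriv Q c‖ ≤ (M + 2 * M * M) / r := by
    rw [← dslope_same]
    exact Complex.norm_dslope_le_div_of_mapsTo_ball hQd
      (fun y hy => by rw [hQ0, mem_closedBall_zero_iff]; exact bQ y hy) hcb
  refine ⟨deriv Q c / w1 c ^ 2, ?_, ?_⟩
  · rw [norm_div, norm_pow, div_le_iff₀ (by positivity)]
    have h4 : 1 / 4 ≤ ‖w1 c‖ ^ 2 := by nlinarith
    have h5 : 0 ≤ (M + 2 * M * M) / r := by positivity
    nlinarith [mul_le_mul_of_nonneg_left h4 h5]
  · intro z hz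
    have hd4 : ‖deriv Q c / w1 c ^ 2‖ ≤ 4 * ((M + 2 * M * M) / r) := by
      rw [norm_div, norm_pow, div_le_iff₀ (by positivity)]
      have h4 : 1 / 4 ≤ ‖w1 c‖ ^ 2 := by nlinarith
      have h5 : 0 ≤ (M + 2 * M * M) / r := by positivity
      nlinarith [mul_le_mul_of_nonneg_left h4 h5]
    refine jac_double_zero (fun z => Q z - deriv Q c / w1 c ^ 2 * (w z * w1 z)) c r _ hr
      (hQd.sub ((hw.mul hw1).const_mul _)) ?_ ?_ ?_ z hz
    · intro y hy
      refine (norm_sub_le _ _).trans ?_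
      rw [norm_mul, norm_mul]
      refine add_le_add (bQ y hy) (mul_le_mul hd4 ?_ (by positivity) (by positivity))
      exact mul_le_mul (bw y hy) (bw1 y hy) (norm_nonneg _) hM0
    · simp only [hQ0, hw0]; ring
    · have k1 := (hQd.differentiableAt hnb).hasDerivAt
      have k2 := (hwd.fun_mul (hw1.differentiableAt hnb).hasDerivAt).const_mul (deriv Q c / w1 c ^ 2)
      rw [(k1.fun_sub k2).deriv, hw0]
      field_simp
      ring

lemma jacA_cont2 : Continuous fun p : ℝ × ℂ => jacA p.1 p.2 := by
  unfold jacA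
  have : Continuous fun p : ℝ × ℂ => ((Real.cos p.1 : ℝ) : ℂ) :=
    Complex.continuous_ofReal.comp (Real.continuous_cos.comp continuous_fst)
  fun_prop

lemma jacW_cont2 : ContinuousOn (fun p : ℝ × ℂ => jacW p.1 p.2)
    {p | jacA p.1 p.2 ∈ Complex.slitPlane} := by
  unfold jacW
  have h1 : ContinuousOn (fun p : ℝ × ℂ => (jacA p.1 p.2) ^ (-(1/2) : ℂ))
      {p | jacA p.1 p.2 ∈ Complex.slitPlane} :=
    jacA_cont2.continuousOn.cpow continuousOn_const fun p hp => hp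
  have h2 : Continuous fun p : ℝ × ℂ => ((√2 : ℝ) : ℂ) * Complex.sin ((p.2 - (p.1 : ℂ)) / 2) := by
    fun_prop
  exact h2.continuousOn.mul h1

lemma jacW1_cont2 : ContinuousOn (fun p : ℝ × ℂ => jacW1 p.1 p.2)
    {p | jacA p.1 p.2 ∈ Complex.slitPlane} := by
  unfold jacW1
  have h1 : ContinuousOn (fun p : ℝ × ℂ => (jacA p.1 p.2) ^ (-(1/2) : ℂ))
      {p | jacA p.1 p.2 ∈ Complex.slitPlane} :=
    jacA_cont2.continuousOn.cpow continuousOn_const fun p hp => hp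
  have h3 : ContinuousOn (fun p : ℝ × ℂ => (jacA p.1 p.2) ^ (-(1/2) - 1 : ℂ))
      {p | jacA p.1 p.2 ∈ Complex.slitPlane} :=
    jacA_cont2.continuousOn.cpow continuousOn_const fun p hp => hp
  have h2 : Continuous fun p : ℝ × ℂ => ((√2 : ℝ) : ℂ) * Complex.sin ((p.2 - (p.1 : ℂ)) / 2) := by
    fun_prop
  have h4 : Continuous fun p : ℝ × ℂ => ((√2 : ℝ) : ℂ) * (Complex.cos ((p.2 - (p.1 : ℂ)) / 2) * (1 / 2)) := by
    fun_prop
  have h5 : Continuous fun p : ℝ × ℂ => ((Real.cos p.1 : ℝ) : ℂ) :=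
    Complex.continuous_ofReal.comp (Real.continuous_cos.comp continuous_fst)
  have h6 : Continuous fun p : ℝ × ℂ => ((Real.cos p.1 : ℝ) : ℂ) * exp (-(p.2 * I)) * I := by
    fun_prop
  exact (h4.continuousOn.mul h1).add
    (h2.continuousOn.mul ((h3.const_mul (-(1/2) : ℂ)).mul h6.continuousOn))

lemma jacg_cont2 (a b : ℝ) : ContinuousOn (fun p : ℝ × ℂ => jacg a b p.1 p.2)
    {p | jacA p.1 p.2 ∈ Complex.slitPlane ∧ 1 - exp (p.2 * I) ∈ Complex.slitPlane ∧
      1 + exp (p.2 * I) ∈ Complex.slitPlane} := by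
  unfold jacg
  have h1 : Continuous fun p : ℝ × ℂ => 1 - exp (p.2 * I) := by fun_prop
  have h2 : Continuous fun p : ℝ × ℂ => 1 + exp (p.2 * I) := by fun_prop
  refine ((h1.continuousOn.cpow continuousOn_const fun p hp => hp.2.1).mul
    (h2.continuousOn.cpow continuousOn_const fun p hp => hp.2.2)).mul
    (jacA_cont2.continuousOn.inv₀ fun p hp => Complex.slitPlane_ne_zero hp.1)

lemma jacW1_diff (θ : ℝ) (z : ℂ) (hz : jacA θ z ∈ Complex.slitPlane) :
    DifferentiableAt ℂ (jacW1 θ) z := by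
  have hA := (jacA_hasDerivAt θ z).differentiableAt
  have h1 := hA.cpow (differentiableAt_const (-(1/2) : ℂ)) hz
  have h3 := hA.cpow (differentiableAt_const (-(1/2) - 1 : ℂ)) hz
  have h2 : DifferentiableAt ℂ (fun z : ℂ => ((√2 : ℝ) : ℂ) * Complex.sin ((z - (θ : ℂ)) / 2)) z := by
    fun_prop
  have h4 : DifferentiableAt ℂ (fun z : ℂ => ((√2 : ℝ) : ℂ) * (Complex.cos ((z - (θ : ℂ)) / 2) * (1 / 2))) z := by
    fun_prop
  have h6 : DifferentiableAt ℂ (fun z : ℂ => ((Real.cos θ : ℝ) : ℂ) * exp (-(z * I)) * I) z := by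
    fun_prop
  exact (h4.mul h1).add (h2.mul ((h3.const_mul (-(1/2) : ℂ)).mul h6))

lemma jacg_diff (a b θ : ℝ) (z : ℂ) (hz : jacA θ z ∈ Complex.slitPlane)
    (h1 : 1 - exp (z * I) ∈ Complex.slitPlane) (h2 : 1 + exp (z * I) ∈ Complex.slitPlane) :
    DifferentiableAt ℂ (jacg a b θ) z := by
  have hA := (jacA_hasDerivAt θ z).differentiableAt
  have k1 : DifferentiableAt ℂ (fun z : ℂ => 1 - exp (z * I)) z := by fun_prop
  have k2 : DifferentiableAt ℂ (fun z : ℂ => 1 + exp (z * I)) z := by fun_prop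
  exact ((k1.cpow (differentiableAt_const (a:ℂ)) h1).mul (k2.cpow (differentiableAt_const (b:ℂ)) h2)).mul
    (hA.inv (Complex.slitPlane_ne_zero hz))

lemma jacW_self (θ : ℝ) : jacW θ θ = 0 := by simp [jacW]

lemma jacW1_self (θ : ℝ) : jacW1 θ θ = ((√2 / 2 : ℝ) : ℂ) * (jacA θ θ) ^ (-(1/2) : ℂ) := by
  simp only [jacW1, sub_self, zero_div, Complex.sin_zero, Complex.cos_zero, mul_zero, zero_mul, add_zero]
  rw [Complex.ofReal_div, Complex.ofReal_ofNat]; ring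

lemma jacA_self (θ : ℝ) :
    jacA θ θ = ((Real.sin θ : ℝ) : ℂ) * exp ((π / 2 - θ : ℝ) * I) := by
  unfold jacA
  have : -((θ:ℂ) * I) = ((-θ : ℝ) : ℂ) * I := by push_cast; ring
  rw [this, Complex.exp_ofReal_mul_I, Complex.exp_ofReal_mul_I, Real.cos_pi_div_two_sub,
    Real.sin_pi_div_two_sub, Real.cos_neg, Real.sin_neg]
  have h := Real.sin_sq_add_cos_sq θ
  apply Complex.ext <;> simp only [Complex.sub_re, Complex.sub_im, Complex.add_re, Complex.add_im, Complex.mul_re, Complex.mul_im, Complex.ofReal_re, Complex.ofReal_im, Complex.I_re, Complex.I_im, Complex.one_re, Complex.one_im] <;> nlinarith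

lemma jacA_self_cpow (θ : ℝ) (hθ : θ ∈ Set.Ioo 0 π) :
    (jacA θ θ) ^ (-(1/2) : ℂ) =
      ((Real.sin θ ^ (-(1/2) : ℝ) : ℝ) : ℂ) * exp ((-(1/2) * (π / 2 - θ) : ℝ) * I) := by
  have hs := Real.sin_pos_of_mem_Ioo hθ
  have e : (-(1/2) : ℂ) = ((-(1/2) : ℝ) : ℂ) := by push_cast; rfl
  rw [jacA_self, e, jac_cpow_polar _ _ _ hs (by linarith [hθ.1, hθ.2, Real.pi_pos]) (by linarith [hθ.1, hθ.2, Real.pi_pos])]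

lemma jacW1_low (θ : ℝ) (hθ : θ ∈ Set.Ioo 0 π) : 1 / 2 ≤ ‖jacW1 θ θ‖ := by
  have hs := Real.sin_pos_of_mem_Ioo hθ
  rw [jacW1_self, jacA_self_cpow θ hθ, norm_mul, norm_mul, Complex.norm_exp_ofReal_mul_I,
    Complex.norm_real, Complex.norm_real, Real.norm_of_nonneg (by positivity),
    Real.norm_of_nonneg (by positivity), mul_one]
  have h1 : 1 ≤ Real.sin θ ^ (-(1/2) : ℝ) :=
    Real.one_le_rpow_of_pos_of_le_one_of_nonpos hs (Real.sin_le_one θ) (by norm_num)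
  have h2 : 1 ≤ √2 := Real.one_le_sqrt.2 (by norm_num)
  nlinarith

lemma jac_one_sub_slit (φ : ℝ) (hφ : φ ∈ Set.Ioo 0 π) : 1 - exp ((φ:ℂ) * I) ∈ Complex.slitPlane := by
  refine Or.inl ?_
  rw [Complex.exp_ofReal_mul_I]
  simp only [Complex.sub_re, Complex.add_re, Complex.mul_re, Complex.ofReal_re, Complex.ofReal_im, Complex.I_re, Complex.I_im, Complex.one_re]
  have : Real.cos φ < Real.cos 0 := Real.cos_lt_cos_of_nonneg_of_le_pi le_rfl hφ.2.le hφ.1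
  rw [Real.cos_zero] at this
  linarith

lemma jac_one_add_slit (φ : ℝ) (hφ : φ ∈ Set.Ioo 0 π) : 1 + exp ((φ:ℂ) * I) ∈ Complex.slitPlane := by
  refine Or.inl ?_
  rw [Complex.exp_ofReal_mul_I]
  simp only [Complex.sub_re, Complex.add_re, Complex.mul_re, Complex.ofReal_re, Complex.ofReal_im, Complex.I_re, Complex.I_im, Complex.one_re]
  have : Real.cos π < Real.cos φ := Real.cos_lt_cos_of_nonneg_of_le_pi hφ.1.le le_rfl hφ.2
  rw [Real.cos_pi] at this
  linarith

lemma jac_local (a b : ℝ) (K : Set ℝ) (hK : IsCompact K) (hK' : K ⊆ Set.Ioo 0 π) :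
    ∃ r > 0, ∃ D : ℝ, ∃ C : ℝ, 0 ≤ C ∧ 0 ≤ D ∧ ∀ θ ∈ K, ‖jacg a b θ θ / jacW1 θ θ‖ ≤ D ∧ ∃ d : ℂ, ‖d‖ ≤ D ∧
      ∀ φ : ℝ, |φ - θ| < r →
        ‖jacg a b θ φ - jacg a b θ θ / jacW1 θ θ * jacW1 θ φ - d * (jacW θ φ * jacW1 θ φ)‖ ≤
          C * (φ - θ) ^ 2 := by
  set U : Set (ℝ × ℂ) := {p | jacA p.1 p.2 ∈ Complex.slitPlane ∧
    1 - exp (p.2 * I) ∈ Complex.slitPlane ∧ 1 + exp (p.2 * I) ∈ Complex.slitPlane} with hU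
  have hUo : IsOpen U := by
    have h1 : Continuous fun p : ℝ × ℂ => 1 - exp (p.2 * I) := by fun_prop
    have h2 : Continuous fun p : ℝ × ℂ => 1 + exp (p.2 * I) := by fun_prop
    exact (Complex.isOpen_slitPlane.preimage jacA_cont2).inter
      ((Complex.isOpen_slitPlane.preimage h1).inter (Complex.isOpen_slitPlane.preimage h2))
  set T : Set (ℝ × ℂ) := Set.image (fun θ : ℝ => (θ, (θ : ℂ))) K with hT
  have hTc : IsCompact T := hK.image (by fun_prop)
  have hTU : T ⊆ U := by
    rintro _ ⟨θ, hθ, rfl⟩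
    exact ⟨jacA_slit θ (hK' hθ) θ, jac_one_sub_slit θ (hK' hθ), jac_one_add_slit θ (hK' hθ)⟩
  obtain ⟨r, hr, hrU⟩ := hTc.exists_cthickening_subset_open hUo hTU
  have hVc : IsCompact (Metric.cthickening r T) := hTc.cthickening
  have hUA : U ⊆ {p | jacA p.1 p.2 ∈ Complex.slitPlane} := fun p hp => hp.1
  obtain ⟨M1, hM1⟩ := hVc.exists_bound_of_continuousOn ((jacg_cont2 a b).mono hrU)
  obtain ⟨M2, hM2⟩ := hVc.exists_bound_of_continuousOn (jacW_cont2.mono (hrU.trans hUA))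
  obtain ⟨M3, hM3⟩ := hVc.exists_bound_of_continuousOn (jacW1_cont2.mono (hrU.trans hUA))
  set M := max 0 (max M1 (max M2 M3)) with hM
  have m0 : 0 ≤ M := le_max_left _ _
  have m1 : M1 ≤ M := (le_max_left _ _).trans (le_max_right _ _)
  have m2 : M2 ≤ M := ((le_max_left _ _).trans (le_max_right _ _)).trans (le_max_right _ _)
  have m3 : M3 ≤ M := ((le_max_right _ _).trans (le_max_right _ _)).trans (le_max_right _ _)
  refine ⟨r, hr, 2 * M + 4 * ((M + 2 * M * M) / r),
    (M + 2 * M * M + 4 * ((M + 2 * M * M) / r) * (M * M)) / r / r, by positivity, by positivity, ?_⟩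
  intro θ hθ
  have hmem : ∀ z ∈ Metric.ball (θ : ℂ) r, (θ, z) ∈ Metric.cthickening r T := fun z hz => by
    refine Metric.mem_cthickening_of_dist_le (θ, z) (θ, (θ:ℂ)) r T ⟨θ, hθ, rfl⟩ ?_
    rw [Prod.dist_eq, dist_self]
    exact max_le hr.le (Metric.mem_ball.1 hz).le
  have hcb : (θ : ℂ) ∈ Metric.ball (θ : ℂ) r := Metric.mem_ball_self hr
  have hlow := jacW1_low θ (hK' hθ)
  obtain ⟨d, hd, hE⟩ := jac_local_abs (jacg a b θ) (jacW θ) (jacW1 θ) θ r M hr m0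
    (fun z hz => (jacg_diff a b θ z (hrU (hmem z hz)).1 (hrU (hmem z hz)).2.1
      (hrU (hmem z hz)).2.2).differentiableWithinAt)
    (fun z hz => (jacW_hasDerivAt θ z (hrU (hmem z hz)).1).differentiableAt.differentiableWithinAt)
    (fun z hz => (jacW1_diff θ z (hrU (hmem z hz)).1).differentiableWithinAt)
    (fun z hz => (hM1 _ (hmem z hz)).trans m1)
    (fun z hz => (hM2 _ (hmem z hz)).trans m2)
    (fun z hz => (hM3 _ (hmem z hz)).trans m3)
    (jacW_self θ) (jacW_hasDerivAt θ θ (hrU (hmem θ hcb)).1) hlow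
  refine ⟨?_, d, hd.trans (by linarith), ?_⟩
  · have h1 : ‖jacg a b θ θ‖ ≤ M := (hM1 _ (hmem θ hcb)).trans m1
    have h2 : 0 ≤ 4 * ((M + 2 * M * M) / r) := by positivity
    rw [norm_div, div_le_iff₀ (by linarith)]
    nlinarith
  · intro φ hφ
    have e : ‖(φ : ℂ) - θ‖ = |φ - θ| := by
      rw [← Complex.ofReal_sub, Complex.norm_real, Real.norm_eq_abs]
    have := hE φ (by rw [Metric.mem_ball, dist_eq_norm, e]; exact hφ)
    rwa [e, sq_abs] at this

end Local

section Global
open Complex (I exp)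

lemma jac_eta (K : Set ℝ) (hK : IsCompact K) (hK' : K ⊆ Set.Ioo 0 π) :
    ∃ η > 0, ∀ θ ∈ K, η ≤ Real.sin (θ / 2) ∧ η ≤ Real.cos (θ / 2) ∧ η ≤ 1 - |Real.cos θ| := by
  have hpi := Real.pi_pos
  obtain ⟨e1, h1, h1'⟩ := hK.exists_forall_le' (f := fun θ : ℝ => Real.sin (θ / 2)) (a := 0)
    (Continuous.continuousOn (by fun_prop)) (fun θ hθ => Real.sin_pos_of_pos_of_lt_pi
      (by linarith [(hK' hθ).1]) (by linarith [(hK' hθ).2]))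
  obtain ⟨e2, h2, h2'⟩ := hK.exists_forall_le' (f := fun θ : ℝ => Real.cos (θ / 2)) (a := 0)
    (Continuous.continuousOn (by fun_prop)) (fun θ hθ => Real.cos_pos_of_mem_Ioo
      ⟨by linarith [(hK' hθ).1], by linarith [(hK' hθ).2]⟩)
  obtain ⟨e3, h3, h3'⟩ := hK.exists_forall_le' (f := fun θ : ℝ => 1 - |Real.cos θ|) (a := 0)
    (Continuous.continuousOn (by fun_prop)) (fun θ hθ => by
      have hs := Real.sin_pos_of_mem_Ioo (hK' hθ)
      have : |Real.cos θ| < 1 := by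
        rw [← sq_lt_one_iff_abs_lt_one]
        nlinarith [Real.sin_sq_add_cos_sq θ]
      linarith)
  refine ⟨min e1 (min e2 e3), by positivity, fun θ hθ => ⟨?_, ?_, ?_⟩⟩
  · exact (min_le_left _ _).trans (h1' θ hθ)
  · exact ((min_le_right _ _).trans (min_le_left _ _)).trans (h2' θ hθ)
  · exact ((min_le_right _ _).trans (min_le_right _ _)).trans (h3' θ hθ)

lemma jac_global (a b : ℝ) (ha : -1 < a) (hb : -1 < b)
    (K : Set ℝ) (hK : IsCompact K) (hK' : K ⊆ Set.Ioo 0 π) :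
    ∃ c0 > 0, ∃ C : ℝ, ∃ D : ℝ, 0 ≤ C ∧ ∀ θ ∈ K, ‖jacg a b θ θ / jacW1 θ θ‖ ≤ D ∧
      ∃ d : ℂ, ∀ φ ∈ Set.Ioo 0 π,
        ‖1 - jacW θ φ ^ 2‖ ≤ Real.exp (-c0 * (φ - θ) ^ 2) ∧
        ‖1 - jacW θ φ ^ 2‖ * ‖jacg a b θ φ - jacg a b θ θ / jacW1 θ θ * jacW1 θ φ -
          d * (jacW θ φ * jacW1 θ φ)‖ ≤ C * (φ - θ) ^ 2 := by
  obtain ⟨η, hη, hηK⟩ := jac_eta K hK hK'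
  obtain ⟨r, hr, D, C, hC, hD, hloc⟩ := jac_local a b K hK hK'
  have hS : IsCompact (K ×ˢ (Set.image (fun x : ℝ => (x : ℂ)) (Set.Icc 0 π))) :=
    hK.prod (isCompact_Icc.image Complex.continuous_ofReal)
  have hSA : (K ×ˢ (Set.image (fun x : ℝ => (x : ℂ)) (Set.Icc 0 π))) ⊆
      {p : ℝ × ℂ | jacA p.1 p.2 ∈ Complex.slitPlane} := by
    rintro ⟨θ, z⟩ ⟨hθ, φ, _, rfl⟩
    exact jacA_slit θ (hK' hθ) φ
  obtain ⟨M2, hM2⟩ := hS.exists_bound_of_continuousOn (jacW_cont2.mono hSA)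
  obtain ⟨M3, hM3⟩ := hS.exists_bound_of_continuousOn (jacW1_cont2.mono hSA)
  set M := max 0 (max M2 M3) with hM
  have m0 : 0 ≤ M := le_max_left _ _
  have m2 : M2 ≤ M := (le_max_left _ _).trans (le_max_right _ _)
  have m3 : M3 ≤ M := (le_max_right _ _).trans (le_max_right _ _)
  set G : ℝ := 2 ^ (a + 1) * 2 ^ (b + 1) / η ^ 2 with hG
  have hG0 : 0 ≤ G := by positivity
  refine ⟨η ^ 2 / (2 * π ^ 2), by positivity, C + (G + D * M + D * (M * M)) / r ^ 2, D,
    by positivity, ?_⟩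
  intro θ hθ
  obtain ⟨hc, d, hd, hE⟩ := hloc θ hθ
  obtain ⟨k1, k2, k3⟩ := hηK θ hθ
  refine ⟨hc, d, fun φ hφ => ?_⟩
  have hexp := jac_exp_bound η hη θ φ (hK' hθ) hφ k1 k2
  refine ⟨hexp, ?_⟩
  have h1 : ‖1 - jacW θ φ ^ 2‖ ≤ 1 := hexp.trans (Real.exp_le_one_iff.2 (by
    have : 0 ≤ η ^ 2 / (2 * π ^ 2) * (φ - θ) ^ 2 := by positivity
    linarith))
  have hX : 0 ≤ (G + D * M + D * (M * M)) / r ^ 2 := by positivity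
  rcases lt_or_ge |φ - θ| r with h | h
  · calc _ ≤ 1 * (C * (φ - θ) ^ 2) := by
          gcongr
          exact hE φ h
      _ ≤ _ := by
        rw [one_mul]; gcongr; linarith
  · have hmem : (θ, (φ : ℂ)) ∈ (K ×ˢ (Set.image (fun x : ℝ => (x : ℂ)) (Set.Icc 0 π))) :=
      ⟨hθ, φ, ⟨hφ.1.le, hφ.2.le⟩, rfl⟩
    have b2 : ‖jacW θ φ‖ ≤ M := (hM2 _ hmem).trans m2
    have b3 : ‖jacW1 θ φ‖ ≤ M := (hM3 _ hmem).trans m3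
    have bg := jac_Wg_bound a b ha hb η hη θ φ (hK' hθ) hφ k3
    have t1 : ‖jacg a b θ φ - jacg a b θ θ / jacW1 θ θ * jacW1 θ φ - d * (jacW θ φ * jacW1 θ φ)‖
        ≤ ‖jacg a b θ φ‖ + D * M + D * (M * M) := by
      refine (norm_sub_le _ _).trans (add_le_add ((norm_sub_le _ _).trans (add_le_add le_rfl ?_)) ?_)
      · rw [norm_mul]; gcongr
      · rw [norm_mul, norm_mul]; gcongr
    have hY : 0 ≤ D * M + D * (M * M) := by positivity
    calc _ ≤ ‖1 - jacW θ φ ^ 2‖ * (‖jacg a b θ φ‖ + D * M + D * (M * M)) := by gcongr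
      _ = ‖1 - jacW θ φ ^ 2‖ * ‖jacg a b θ φ‖ + ‖1 - jacW θ φ ^ 2‖ * (D * M + D * (M * M)) := by ring
      _ ≤ G + 1 * (D * M + D * (M * M)) := by gcongr
      _ = (G + D * M + D * (M * M)) / r ^ 2 * r ^ 2 := by field_simp; ring
      _ ≤ (G + D * M + D * (M * M)) / r ^ 2 * (φ - θ) ^ 2 := by
          rw [← sq_abs (φ - θ)]
          gcongr
      _ ≤ _ := by gcongr; linarith

lemma jac_main (a b : ℝ) (ha : -1 < a) (hb : -1 < b)
    (K : Set ℝ) (hK : IsCompact K) (hK' : K ⊆ Set.Ioo 0 π) :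
    ∃ C : ℝ, ∃ D : ℝ, ∀ θ ∈ K, ‖jacg a b θ θ / jacW1 θ θ‖ ≤ D ∧ ∀ n : ℕ, 1 ≤ n →
      ‖(∫ φ in (0:ℝ)..π, jacG a b n (Real.cos θ) (exp (φ * I))) -
        (-2) ^ n * exp (θ * I) ^ n * (jacg a b θ θ / jacW1 θ θ *
          ((∫ s in (-1:ℝ)..1, (1 - s ^ 2) ^ n : ℝ) : ℂ))‖ ≤ 2 ^ n * (C * (n:ℝ) ^ (-(3:ℝ)/2)) := by
  obtain ⟨c0, hc0, C, D, hC, H⟩ := jac_global a b ha hb K hK hK'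
  refine ⟨C * Real.exp (c0 * π ^ 2) * (2 / c0 * √(2 * π / c0)), D, fun θ hθ => ?_⟩
  obtain ⟨hcD, d, hd⟩ := H θ hθ
  refine ⟨hcD, fun n hn => ?_⟩
  have hn0 : (0:ℝ) < n := by exact_mod_cast hn
  have hθ' := hK' hθ
  have hxI : Real.cos θ ∈ Set.Ioo (-1:ℝ) 1 := by
    constructor
    · have := Real.cos_lt_cos_of_nonneg_of_le_pi hθ'.1.le le_rfl hθ'.2
      rwa [Real.cos_pi] at this
    · have := Real.cos_lt_cos_of_nonneg_of_le_pi le_rfl hθ'.2.le hθ'.1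
      rwa [Real.cos_zero] at this
  set c := jacg a b θ θ / jacW1 θ θ with hc
  have cG := jacG_continuous a b ha hb n hn (Real.cos θ) hxI
  have cW : Continuous fun φ : ℝ => jacW θ φ := continuous_iff_continuousAt.2 fun φ =>
    (jacW_hasDerivAt θ φ (jacA_slit θ hθ' φ)).continuousAt.comp Complex.continuous_ofReal.continuousAt
  have cW1 : Continuous fun φ : ℝ => jacW1 θ φ := continuous_iff_continuousAt.2 fun φ =>
    (jacW1_diff θ φ (jacA_slit θ hθ' φ)).continuousAt.comp Complex.continuous_ofReal.continuousAt
  have c1 : Continuous fun φ : ℝ => (1 - jacW θ φ ^ 2) ^ n * jacW1 θ φ := by fun_prop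
  have c2 : Continuous fun φ : ℝ => (1 - jacW θ φ ^ 2) ^ n * (jacW θ φ * jacW1 θ φ) := by fun_prop
  have e : (∫ φ in (0:ℝ)..π, jacG a b n (Real.cos θ) (exp (φ * I))) -
        (-2) ^ n * exp (θ * I) ^ n * (c * ((∫ s in (-1:ℝ)..1, (1 - s ^ 2) ^ n : ℝ) : ℂ)) =
      ∫ φ in (0:ℝ)..π, (jacG a b n (Real.cos θ) (exp (φ * I)) -
        ((-2) ^ n * exp (θ * I) ^ n * c) * ((1 - jacW θ φ ^ 2) ^ n * jacW1 θ φ) -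
        ((-2) ^ n * exp (θ * I) ^ n * d) * ((1 - jacW θ φ ^ 2) ^ n * (jacW θ φ * jacW1 θ φ))) := by
    have i1 : IntervalIntegrable (fun φ : ℝ => jacG a b n (Real.cos θ) (exp (φ * I))) volume 0 π :=
      cG.intervalIntegrable _ _
    have i2 : IntervalIntegrable (fun φ : ℝ => ((-2) ^ n * exp (θ * I) ^ n * c) * ((1 - jacW θ φ ^ 2) ^ n * jacW1 θ φ)) volume 0 π :=
      (c1.const_mul _).intervalIntegrable _ _
    have i3 : IntervalIntegrable (fun φ : ℝ => ((-2) ^ n * exp (θ * I) ^ n * d) * ((1 - jacW θ φ ^ 2) ^ n * (jacW θ φ * jacW1 θ φ))) volume 0 π :=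
      (c2.const_mul _).intervalIntegrable _ _
    rw [intervalIntegral.integral_sub (i1.sub i2) i3, intervalIntegral.integral_sub i1 i2,
      intervalIntegral.integral_const_mul, intervalIntegral.integral_const_mul,
      jac_integral_W1 n θ hθ', jac_integral_WW1 n θ hθ']
    ring
  rw [e]
  set R : ℝ := 2 ^ n * (C * Real.exp (c0 * π ^ 2)) with hR
  have hR0 : 0 ≤ R := by positivity
  have hb : ∀ φ ∈ Set.Ioo 0 π, ‖jacG a b n (Real.cos θ) (exp (φ * I)) -
        ((-2) ^ n * exp (θ * I) ^ n * c) * ((1 - jacW θ φ ^ 2) ^ n * jacW1 θ φ) -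
        ((-2) ^ n * exp (θ * I) ^ n * d) * ((1 - jacW θ φ ^ 2) ^ n * (jacW θ φ * jacW1 θ φ))‖ ≤
      R * ((φ - θ) ^ 2 * Real.exp (-(c0 * n) * (φ - θ) ^ 2)) := by
    intro φ hφ
    obtain ⟨q1, q2⟩ := hd φ hφ
    rw [jacG_eq a b n θ hθ' φ hφ]
    obtain ⟨m, rfl⟩ : ∃ m, n = m + 1 := ⟨n - 1, by omega⟩
    have e2 : (-2) ^ (m+1) * exp (θ * I) ^ (m+1) * ((1 - jacW θ φ ^ 2) ^ (m+1) * jacg a b θ φ) -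
        ((-2) ^ (m+1) * exp (θ * I) ^ (m+1) * c) * ((1 - jacW θ φ ^ 2) ^ (m+1) * jacW1 θ φ) -
        ((-2) ^ (m+1) * exp (θ * I) ^ (m+1) * d) * ((1 - jacW θ φ ^ 2) ^ (m+1) * (jacW θ φ * jacW1 θ φ)) =
        (-2) ^ (m+1) * exp (θ * I) ^ (m+1) * ((1 - jacW θ φ ^ 2) ^ m * ((1 - jacW θ φ ^ 2) *
          (jacg a b θ φ - c * jacW1 θ φ - d * (jacW θ φ * jacW1 θ φ)))) := by ring
    rw [e2, norm_mul, norm_mul, norm_mul, norm_mul, norm_pow, norm_pow, norm_pow, norm_neg,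
      Complex.norm_ofNat, Complex.norm_exp_ofReal_mul_I, one_pow, mul_one]
    have h5 : Real.exp (-c0 * (φ - θ) ^ 2) ^ m ≤
        Real.exp (c0 * π ^ 2) * Real.exp (-(c0 * ((m + 1 : ℕ) : ℝ)) * (φ - θ) ^ 2) := by
      rw [← Real.exp_nat_mul, ← Real.exp_add, Real.exp_le_exp]
      have : (φ - θ) ^ 2 ≤ π ^ 2 := sq_le_sq' (by linarith [hφ.1, hφ.2, hθ'.1, hθ'.2]) (by linarith [hφ.1, hφ.2, hθ'.1, hθ'.2])
      push_cast
      nlinarith [mul_le_mul_of_nonneg_left this hc0.le]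
    calc _ ≤ 2 ^ (m+1) * (Real.exp (-c0 * (φ - θ) ^ 2) ^ m * (C * (φ - θ) ^ 2)) := by gcongr
      _ ≤ 2 ^ (m+1) * ((Real.exp (c0 * π ^ 2) * Real.exp (-(c0 * ((m + 1 : ℕ) : ℝ)) * (φ - θ) ^ 2)) * (C * (φ - θ) ^ 2)) := by gcongr
      _ = _ := by rw [hR]; ring
  have hae : ∀ᵐ φ ∂(volume : Measure ℝ), φ ∈ Set.Ioc 0 π → ‖jacG a b n (Real.cos θ) (exp (φ * I)) -
        ((-2) ^ n * exp (θ * I) ^ n * c) * ((1 - jacW θ φ ^ 2) ^ n * jacW1 θ φ) -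
        ((-2) ^ n * exp (θ * I) ^ n * d) * ((1 - jacW θ φ ^ 2) ^ n * (jacW θ φ * jacW1 θ φ))‖ ≤
      R * ((φ - θ) ^ 2 * Real.exp (-(c0 * n) * (φ - θ) ^ 2)) := by
    have : ({π}ᶜ : Set ℝ) ∈ ae (volume : Measure ℝ) := compl_mem_ae_iff.2 (measure_singleton π)
    filter_upwards [this] with φ h1 h2
    exact hb φ ⟨h2.1, lt_of_le_of_ne h2.2 h1⟩
  have hfin := intervalIntegral.norm_integral_le_of_norm_le Real.pi_pos.le hae
    (Continuous.intervalIntegrable (by fun_prop) _ _)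
  refine hfin.trans ?_
  rw [intervalIntegral.integral_const_mul]
  have hg := jac_gauss (c0 * n) θ (by positivity)
  have hlast : 2 / (c0 * n) * √(π / (c0 * n / 2)) = 2 / c0 * √(2 * π / c0) * (n:ℝ) ^ (-(3:ℝ)/2) := by
    have e : (n:ℝ) ^ (-(3:ℝ)/2) = 1 / √n * (1 / n) := by
      rw [show -(3:ℝ)/2 = -(1/2) + (-1) by norm_num, Real.rpow_add hn0, Real.rpow_neg hn0.le,
        ← Real.sqrt_eq_rpow, Real.rpow_neg_one]
      simp
    have e1 : π / (c0 * n / 2) = 2 * π / c0 / n := by field_simp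
    rw [e, e1, Real.sqrt_div (by positivity)]
    field_simp
  calc _ ≤ R * (2 / (c0 * n) * √(π / (c0 * n / 2))) := by gcongr
    _ = _ := by rw [hlast, hR]; ring

end Global

section Final
open Complex (I exp)

lemma jac_c_eq (a b θ : ℝ) (hθ : θ ∈ Set.Ioo 0 π) :
    jacg a b θ θ / jacW1 θ θ =
      (((1 - Real.cos θ) ^ a * (1 + Real.cos θ) ^ b *
        (Real.sin (θ / 2) ^ (-a - 1 / 2) * Real.cos (θ / 2) ^ (-b - 1 / 2)) : ℝ) : ℂ) *
      exp (((a + b + 1) / 2 * θ - π / 2 * (a + 1 / 2) : ℝ) * I) := by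
  have hA := jacA_ne θ hθ θ
  have hsin := Real.sin_pos_of_mem_Ioo hθ
  have hθ' := hθ
  obtain ⟨h0, h1⟩ := hθ
  have p1 : 0 < Real.sin (θ / 2) := Real.sin_pos_of_pos_of_lt_pi (by linarith) (by linarith)
  have p2 : 0 < Real.cos (θ / 2) := Real.cos_pos_of_mem_Ioo ⟨by linarith, by linarith⟩
  have e3 : 1 + Real.cos θ = 2 * (Real.cos (θ / 2) * Real.cos (θ / 2)) := by
    have := Real.cos_two_mul (θ / 2)
    rw [show 2 * (θ / 2) = θ by ring] at this
    linarith
  have e3' : 1 - Real.cos θ = 2 * (Real.sin (θ / 2) * Real.sin (θ / 2)) := by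
    nlinarith [Real.sin_sq_add_cos_sq (θ / 2)]
  have e4 : Real.sin θ = 2 * Real.sin (θ / 2) * Real.cos (θ / 2) := by
    have := Real.sin_two_mul (θ / 2)
    rwa [show 2 * (θ / 2) = θ by ring] at this
  set S := Real.sin (θ / 2) with hS
  set Q := Real.cos (θ / 2) with hQ
  have hinv : (jacA θ θ)⁻¹ = (jacA θ θ) ^ (-(1/2) : ℂ) * (jacA θ θ) ^ (-(1/2) : ℂ) := by
    rw [← Complex.cpow_add _ _ hA, ← Complex.cpow_neg_one]; norm_num
  have hX : (jacA θ θ) ^ (-(1/2) : ℂ) ≠ 0 := by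
    rw [Ne, Complex.cpow_eq_zero_iff]; tauto
  have h2 : ((√2 / 2 : ℝ) : ℂ) ≠ 0 := by
    have : (√2 / 2 : ℝ) ≠ 0 := by positivity
    exact_mod_cast this
  have step : jacg a b θ θ / jacW1 θ θ =
      (1 - exp ((θ:ℂ) * I)) ^ (a : ℂ) * (1 + exp ((θ:ℂ) * I)) ^ (b : ℂ) * (((√2 : ℝ) : ℂ) * (jacA θ θ) ^ (-(1/2) : ℂ)) := by
    rw [jacW1_self, div_eq_iff (mul_ne_zero h2 hX), jacg, hinv]
    have : ((√2 : ℝ) : ℂ) * ((√2 / 2 : ℝ) : ℂ) = 1 := by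
      rw [← Complex.ofReal_mul]
      have : √2 * (√2 / 2) = 1 := by nlinarith [Real.mul_self_sqrt (show (0:ℝ) ≤ 2 by norm_num)]
      rw [this]; simp
    linear_combination (-((1 - exp ((θ:ℂ) * I)) ^ (a : ℂ) * (1 + exp ((θ:ℂ) * I)) ^ (b : ℂ) * (jacA θ θ) ^ (-(1/2) : ℂ) * (jacA θ θ) ^ (-(1/2) : ℂ))) * this
  rw [step, jacA_self_cpow θ hθ', jac_norm_one_sub_exp θ hθ', jac_norm_one_add_exp θ hθ',
    jac_cpow_polar _ _ _ (by positivity) (by linarith) (by linarith),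
    jac_cpow_polar _ _ _ (by positivity) (by linarith) (by linarith)]
  have hph : exp (((a + b + 1) / 2 * θ - π / 2 * (a + 1 / 2) : ℝ) * I) =
      exp ((a * ((θ - π) / 2) : ℝ) * I) * exp ((b * (θ / 2) : ℝ) * I) *
        exp ((-(1/2) * (π / 2 - θ) : ℝ) * I) := by
    rw [← Complex.exp_add, ← Complex.exp_add]
    congr 1
    push_cast
    ring
  have hmag : (1 - Real.cos θ) ^ a * (1 + Real.cos θ) ^ b * (S ^ (-a - 1 / 2) * Q ^ (-b - 1 / 2)) =
      (2 * S) ^ a * (2 * Q) ^ b * (√2 * Real.sin θ ^ (-(1/2) : ℝ)) := by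
    rw [e3, e3', e4, Real.sqrt_eq_rpow]
    have hS0 := p1.le
    have hQ0 := p2.le
    have t2 : (0:ℝ) ≤ 2 := by norm_num
    rw [Real.mul_rpow (x := 2) (y := S * S) t2 (mul_nonneg hS0 hS0),
      Real.mul_rpow (x := 2) (y := Q * Q) t2 (mul_nonneg hQ0 hQ0),
      Real.mul_rpow (x := S) (y := S) hS0 hS0, Real.mul_rpow (x := Q) (y := Q) hQ0 hQ0,
      Real.mul_rpow (x := 2 * S) (y := Q) (mul_nonneg t2 hS0) hQ0,
      Real.mul_rpow (x := 2) (y := S) (z := a) t2 hS0,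
      Real.mul_rpow (x := 2) (y := S) (z := -(1/2)) t2 hS0,
      Real.mul_rpow (x := 2) (y := Q) t2 hQ0]
    have k1 : S ^ (-a - 1 / 2) = S ^ (-(1/2) : ℝ) * (S ^ a)⁻¹ := by
      rw [← Real.rpow_neg hS0, ← Real.rpow_add p1]; congr 1; ring
    have k2 : Q ^ (-b - 1 / 2) = Q ^ (-(1/2) : ℝ) * (Q ^ b)⁻¹ := by
      rw [← Real.rpow_neg hQ0, ← Real.rpow_add p2]; congr 1; ring
    have k3 : (2:ℝ) ^ (1 / 2 : ℝ) * 2 ^ (-(1/2) : ℝ) = 1 := by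
      rw [← Real.rpow_add (by norm_num)]; norm_num
    have n1 : S ^ a ≠ 0 := by positivity
    have n2 : Q ^ b ≠ 0 := by positivity
    rw [k1, k2]
    calc _ = (2:ℝ) ^ a * 2 ^ b * S ^ a * Q ^ b * S ^ (-(1/2) : ℝ) * Q ^ (-(1/2) : ℝ) := by
          field_simp
      _ = 2 ^ a * 2 ^ b * S ^ a * Q ^ b * S ^ (-(1/2) : ℝ) * Q ^ (-(1/2) : ℝ) * ((2:ℝ) ^ (1 / 2 : ℝ) * 2 ^ (-(1/2) : ℝ)) := by
          rw [k3, mul_one]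
      _ = _ := by ring
  rw [hmag, hph]
  simp only [Complex.ofReal_mul]
  ring

end Final

/-- Darboux/Szegő asymptotics for Jacobi polynomials, uniformly on compact
subsets of `(0,π)`, with error `O(n^{-3/2})`. -/
theorem jacobiP_darboux_asymptotics (a b : ℝ) (ha : -1 < a) (hb : -1 < b)
    (K : Set ℝ) (hK : IsCompact K) (hK' : K ⊆ Set.Ioo 0 π) :
    ∃ C : ℝ, ∀ n : ℕ, 1 ≤ n → ∀ θ ∈ K,
      |jacobiP a b n (Real.cos θ) -
          (π * n) ^ (-(1 : ℝ) / 2) * (Real.sin (θ / 2)) ^ (-a - 1 / 2) *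
            (Real.cos (θ / 2)) ^ (-b - 1 / 2) *
            Real.cos (((n : ℝ) + (a + b + 1) / 2) * θ - (π / 2) * (a + 1 / 2))| ≤
        C * (n : ℝ) ^ (-(3 : ℝ) / 2) := by
  obtain ⟨C, D, H⟩ := jac_main a b ha hb K hK hK'
  have hWpos : ∀ θ ∈ K, 0 < (1 - Real.cos θ) ^ a * (1 + Real.cos θ) ^ b ∧
      Real.cos θ ∈ Set.Ioo (-1:ℝ) 1 := by
    intro θ hθ
    have hθ' := hK' hθ
    have h1 := Real.cos_lt_cos_of_nonneg_of_le_pi hθ'.1.le le_rfl hθ'.2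
    rw [Real.cos_pi] at h1
    have h2 := Real.cos_lt_cos_of_nonneg_of_le_pi le_rfl hθ'.2.le hθ'.1
    rw [Real.cos_zero] at h2
    exact ⟨mul_pos (Real.rpow_pos_of_pos (by linarith) _) (Real.rpow_pos_of_pos (by linarith) _), h1, h2⟩
  have hcont : ContinuousOn (fun θ : ℝ => (1 - Real.cos θ) ^ a * (1 + Real.cos θ) ^ b) K := by
    have c1 : ContinuousOn (fun θ : ℝ => 1 - Real.cos θ) K := Continuous.continuousOn (by fun_prop)
    have c2 : ContinuousOn (fun θ : ℝ => 1 + Real.cos θ) K := Continuous.continuousOn (by fun_prop)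
    refine (c1.rpow_const fun θ hθ => Or.inl ?_).mul (c2.rpow_const fun θ hθ => Or.inl ?_)
    · have := (hWpos θ hθ).2.2
      linarith
    · have := (hWpos θ hθ).2.1
      linarith
  obtain ⟨w0, hw0, hw0'⟩ := hK.exists_forall_le' hcont (a := 0) fun θ hθ => (hWpos θ hθ).1
  refine ⟨(C + D * √π) / (π * w0), fun n hn θ hθ => ?_⟩
  obtain ⟨hD, hH⟩ := H θ hθ
  have hmain := hH n hn
  obtain ⟨hWp, hx⟩ := hWpos θ hθ
  have hWl := hw0' θ hθ
  have hP := jacobiP_integral a b ha hb n hn (Real.cos θ) hx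
  have hB := jac_B n hn
  have hpi := Real.pi_pos
  have hn0 : (0:ℝ) < n := by exact_mod_cast hn
  have hceq := jac_c_eq a b θ (hK' hθ)
  set W := (1 - Real.cos θ) ^ a * (1 + Real.cos θ) ^ b with hW
  set ρ := Real.sin (θ / 2) ^ (-a - 1 / 2) * Real.cos (θ / 2) ^ (-b - 1 / 2) with hρ
  set ψ := (a + b + 1) / 2 * θ - π / 2 * (a + 1 / 2) with hψ
  set c := jacg a b θ θ / jacW1 θ θ with hc
  set J := ∫ φ in (0:ℝ)..π, jacG a b n (Real.cos θ) (Complex.exp (φ * Complex.I)) with hJ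
  set B := ∫ s in (-1:ℝ)..1, (1 - s ^ 2) ^ n with hBdef
  set N := (n:ℝ) ^ (-(3:ℝ)/2) with hN
  set P := jacobiP a b n (Real.cos θ) with hPdef
  have hN0 : 0 ≤ N := by positivity
  have hre : (Complex.exp (θ * Complex.I) ^ n * c).re = W * ρ * Real.cos (n * θ + ψ) := by
    have : Complex.exp (θ * Complex.I) ^ n * c =
        ((W * ρ : ℝ) : ℂ) * Complex.exp ((n * θ + ψ : ℝ) * Complex.I) := by
      rw [hceq, ← Complex.exp_nat_mul]
      have : Complex.exp ((n * θ + ψ : ℝ) * Complex.I) =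
          Complex.exp (n * (θ * Complex.I)) * Complex.exp ((ψ : ℝ) * Complex.I) := by
        rw [← Complex.exp_add]; congr 1; push_cast; ring
      rw [this]; ring
    rw [this, Complex.re_ofReal_mul, Complex.exp_ofReal_mul_I_re]
  have hreabs : |W * ρ * Real.cos (n * θ + ψ)| ≤ D := by
    rw [← hre]
    refine (Complex.abs_re_le_norm _).trans ?_
    rw [norm_mul, norm_pow, Complex.norm_exp_ofReal_mul_I, one_pow, one_mul]
    exact hD
  have hT : ((-2) ^ n * Complex.exp (θ * Complex.I) ^ n * (c * (B : ℂ))).re =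
      (-2) ^ n * (B * (W * ρ * Real.cos (n * θ + ψ))) := by
    have : (-2) ^ n * Complex.exp (θ * Complex.I) ^ n * (c * (B : ℂ)) =
        (((-2) ^ n * B : ℝ) : ℂ) * (Complex.exp (θ * Complex.I) ^ n * c) := by
      push_cast; ring
    rw [this, Complex.re_ofReal_mul, hre]; ring
  have h1 : |J.re - (-2) ^ n * (B * (W * ρ * Real.cos (n * θ + ψ)))| ≤ 2 ^ n * (C * N) := by
    rw [← hT, ← Complex.sub_re]
    exact (Complex.abs_re_le_norm _).trans hmain
  have h2 : J.re = (-2) ^ n * (π * W * P) := by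
    have : π * ((-2) ^ n * W * P) = J.re := by rw [hP]; field_simp
    rw [← this]; ring
  have h3 : |π * W * P - B * (W * ρ * Real.cos (n * θ + ψ))| ≤ C * N := by
    rw [h2, ← mul_sub, abs_mul, abs_pow, abs_neg, abs_of_pos (by norm_num : (0:ℝ) < 2)] at h1
    exact le_of_mul_le_mul_left h1 (by positivity)
  have h4 : |B * (W * ρ * Real.cos (n * θ + ψ)) - √(π / n) * (W * ρ * Real.cos (n * θ + ψ))| ≤
      √π * N * D := by
    rw [← sub_mul, abs_mul]
    exact mul_le_mul hB hreabs (abs_nonneg _) (by positivity)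
  have h5 : |π * W * P - √(π / n) * (W * ρ * Real.cos (n * θ + ψ))| ≤ (C + D * √π) * N := by
    have := abs_sub_le (π * W * P) (B * (W * ρ * Real.cos (n * θ + ψ)))
      (√(π / n) * (W * ρ * Real.cos (n * θ + ψ)))
    calc _ ≤ _ := this
      _ ≤ C * N + √π * N * D := add_le_add h3 h4
      _ = _ := by ring
  have hroot : √(π / n) = π * (π * n) ^ (-(1:ℝ) / 2) := by
    rw [show -(1:ℝ)/2 = -(1/2) by norm_num, Real.rpow_neg (by positivity), ← Real.sqrt_eq_rpow,
      Real.sqrt_div hpi.le, Real.sqrt_mul hpi.le]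
    have := Real.mul_self_sqrt hpi.le
    have s1 : √π ≠ 0 := by positivity
    have s2 : √(n:ℝ) ≠ 0 := by positivity
    field_simp
    linarith
  have harg : ((n:ℝ) + (a + b + 1) / 2) * θ - (π / 2) * (a + 1 / 2) = n * θ + ψ := by
    rw [hψ]; ring
  rw [harg]
  have h6 : π * W * P - √(π / n) * (W * ρ * Real.cos (n * θ + ψ)) =
      (π * W) * (P - (π * n) ^ (-(1:ℝ) / 2) * Real.sin (θ / 2) ^ (-a - 1 / 2) *
        Real.cos (θ / 2) ^ (-b - 1 / 2) * Real.cos (n * θ + ψ)) := by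
    rw [hroot, hρ]; ring
  rw [h6, abs_mul, abs_of_pos (by positivity)] at h5
  have h7 : (π * w0) * |P - (π * n) ^ (-(1:ℝ) / 2) * Real.sin (θ / 2) ^ (-a - 1 / 2) *
        Real.cos (θ / 2) ^ (-b - 1 / 2) * Real.cos (n * θ + ψ)| ≤ (C + D * √π) * N := by
    refine le_trans ?_ h5
    gcongr
  rw [div_mul_eq_mul_div, le_div_iff₀ (by positivity)]
  linarith
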